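/- arXiv:2105.09001 — 7 statements merged into one kernel-verified Lean document; each statement's English description precedes it below -/
import Mathlib

section
/- Let n ≥ 5. Every local automorphism of the (n+1)-dimensional complex solvable Leibniz algebra R_0 is an automorphism of R_0. -/
/-!
`R₀` is the `(n+1)`-dimensional complex solvable Leibniz algebra with basis
`e_0, e_1, …, e_n` and nonzero products `[e_i, e_1] = e_{i+1}` for `0 ≤ i ≤ n-1`,
`[e_i, e_0] = -i • e_i` for `1 ≤ i ≤ n`.  We realize it on `Fin (n+1) → ℂ`
(with `e_i = Pi.single i 1`), the bracket being given coordinatewise.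
-/

/-- The bracket of the Leibniz algebra `R₀` on `Fin (n+1) → ℂ`. -/
def bracketR0 (n : ℕ) (u v : Fin (n + 1) → ℂ) : Fin (n + 1) → ℂ := fun k =>
  (if 1 ≤ k.val then u ⟨k.val - 1, lt_of_le_of_lt (Nat.sub_le _ _) k.isLt⟩ * v 1 else 0)
    - (k.val : ℂ) * u k * v 0

/-- An automorphism of `R₀`: a bijective `ℂ`-linear map preserving the bracket. -/
def IsAutR0 (n : ℕ) (φ : (Fin (n + 1) → ℂ) →ₗ[ℂ] (Fin (n + 1) → ℂ)) : Prop :=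
  Function.Bijective φ ∧ ∀ u v, φ (bracketR0 n u v) = bracketR0 n (φ u) (φ v)

/-!
Identify `e_i` with `t ^ i` in `ℂ[t] / (t ^ (n + 1))`; the bracket becomes
`[f, g] = t * (g₁ * f - g₀ * df/dt)`. Hence the solutions of `[f, f] = 0` with `f₀ = 1` are exactly
the exponentials `exp (x * t)`. An automorphism preserves this set, and a local automorphism `Φ`
inherits this pointwise: `Φ (exp (x * t)) = exp (c x * t)`. Automorphisms also preserve the ideal
generated by `t ^ 2`, so the coefficient of `t` in `Φ f` depends only on `f₀` and `f₁`, whence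
`c x = α + β * x`. Since the exponentials span the algebra and
`[exp (x * t), exp (y * t)] = (y - x) * d/dx exp (x * t)`, a linear map acting on them by
`x ↦ α + β * x` preserves the bracket.
-/

variable {n : ℕ}

section Bracket

variable (u v : Fin (n + 1) → ℂ)

lemma bracketR0_apply_zero : bracketR0 n u v 0 = 0 := by
  simp [bracketR0]

lemma bracketR0_apply_succ (k : Fin n) :
    bracketR0 n u v k.succ = u k.castSucc * v 1 - ((k : ℂ) + 1) * u k.succ * v 0 := by
  simp [bracketR0, Fin.castSucc, Fin.castAdd, Fin.castLE]

lemma bracketR0_apply_one [NeZero n] :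
    bracketR0 n u v 1 = u 0 * v 1 - u 1 * v 0 := by
  simpa [Fin.succ_zero_eq_one'] using bracketR0_apply_succ u v 0

variable {v} in
lemma bracketR0_eq_zero_of_right (hv₀ : v 0 = 0) (hv₁ : v 1 = 0) :
    bracketR0 n u v = 0 := by
  funext k
  simp [bracketR0, hv₀, hv₁]

lemma bracketR0_single_one_apply_succ [NeZero n] (k : Fin n) :
    bracketR0 n u (Pi.single 1 1) k.succ = u k.castSucc := by
  simp [bracketR0_apply_succ]

lemma bracketR0_single_zero_single_one [NeZero n] :
    bracketR0 n (Pi.single 0 1) (Pi.single 1 1) = Pi.single 1 1 := by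
  funext k
  cases k using Fin.cases with
  | zero => simp [bracketR0_apply_zero]
  | succ k =>
    rw [bracketR0_single_one_apply_succ, ← Fin.succ_zero_eq_one']
    simp only [Pi.single_apply, Fin.castSucc_eq_zero_iff, Fin.succ_inj]

lemma bracketR0_single_one_single_zero [NeZero n] :
    bracketR0 n (Pi.single 1 1) (Pi.single 0 1) = -Pi.single 1 1 := by
  funext k
  cases k using Fin.cases with
  | zero => simp [bracketR0_apply_zero]
  | succ k =>
    by_cases hk : k = 0 <;>
      simp [bracketR0_apply_succ, Pi.single_apply, ← Fin.succ_zero_eq_one', hk]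

lemma exists_bracketR0_single_one_eq [NeZero n] {u : Fin (n + 1) → ℂ} (hu : u 0 = 0) :
    ∃ w : Fin (n + 1) → ℂ, w 0 = u 1 ∧ bracketR0 n w (Pi.single 1 1) = u := by
  refine ⟨Fin.snoc (Fin.tail u) 0, ?_, ?_⟩
  · rw [← Fin.castSucc_zero', Fin.snoc_castSucc, Fin.tail, Fin.succ_zero_eq_one']
  · funext k
    cases k using Fin.cases with
    | zero => rw [bracketR0_apply_zero, hu]
    | succ k => rw [bracketR0_single_one_apply_succ, Fin.snoc_castSucc, Fin.tail]

end Bracket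

/-- The bracket of `R₀` bundled as a bilinear map. -/
def bracketR0Bilin (n : ℕ) :
    (Fin (n + 1) → ℂ) →ₗ[ℂ] (Fin (n + 1) → ℂ) →ₗ[ℂ] (Fin (n + 1) → ℂ) :=
  LinearMap.mk₂ ℂ (bracketR0 n)
    (fun _ _ _ => by funext k; simp only [bracketR0, Pi.add_apply]; split_ifs <;> ring)
    (fun _ _ _ => by
      funext k; simp only [bracketR0, Pi.smul_apply, smul_eq_mul]; split_ifs <;> ring)
    (fun _ _ _ => by funext k; simp only [bracketR0, Pi.add_apply]; split_ifs <;> ring)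
    (fun _ _ _ => by
      funext k; simp only [bracketR0, Pi.smul_apply, smul_eq_mul]; split_ifs <;> ring)

/-- The exponential `exp (x * t)` truncated modulo `t ^ (n + 1)`, as a vector of `R₀` with `e_i`
read as `t ^ i`. -/
noncomputable def expVec (n : ℕ) (x : ℂ) : Fin (n + 1) → ℂ :=
  fun k => x ^ (k : ℕ) / (k : ℕ).factorial

lemma expVec_apply_zero (x : ℂ) : expVec n x 0 = 1 := by
  simp [expVec]

lemma expVec_apply_succ (x : ℂ) (k : Fin n) :
    ((k : ℂ) + 1) * expVec n x k.succ = x * expVec n x k.castSucc := by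
  have hk : (k : ℂ) + 1 ≠ 0 := Nat.cast_add_one_ne_zero _
  simp only [expVec, Fin.val_succ, Fin.val_castSucc, Nat.factorial_succ]
  push_cast
  field_simp
  ring

lemma expVec_apply_one [NeZero n] (x : ℂ) : expVec n x 1 = x := by
  simpa [Fin.succ_zero_eq_one', expVec_apply_zero] using expVec_apply_succ x (0 : Fin n)

lemma eq_expVec_of_bracketR0_self_eq_zero {u : Fin (n + 1) → ℂ} (hu₀ : u 0 = 1)
    (hu : bracketR0 n u u = 0) : u = expVec n (u 1) := by
  funext k
  induction k using Fin.induction with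
  | zero => rw [hu₀, expVec_apply_zero]
  | succ k ih =>
    have hk : (k : ℂ) + 1 ≠ 0 := Nat.cast_add_one_ne_zero _
    have recurrence : u k.castSucc * u 1 - ((k : ℂ) + 1) * u k.succ = 0 := by
      simpa [bracketR0_apply_succ, hu₀] using congrFun hu k.succ
    apply mul_left_cancel₀ hk
    rw [expVec_apply_succ, ← ih]
    linear_combination -recurrence

lemma bracketR0_expVec_expVec [NeZero n] (x y : ℂ) :
    bracketR0 n (expVec n x) (expVec n y) =
      (y - x) • bracketR0 n (expVec n x) (Pi.single 1 1) := by
  funext k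
  cases k using Fin.cases with
  | zero => simp [bracketR0_apply_zero]
  | succ k =>
    rw [Pi.smul_apply, smul_eq_mul, bracketR0_single_one_apply_succ, bracketR0_apply_succ,
      expVec_apply_zero, expVec_apply_one]
    linear_combination -expVec_apply_succ x k

lemma hasDerivAt_expVec [NeZero n] (x : ℂ) :
    HasDerivAt (expVec n) (bracketR0 n (expVec n x) (Pi.single 1 1)) x := by
  rw [hasDerivAt_pi]
  intro k
  cases k using Fin.cases with
  | zero => simpa [expVec_apply_zero, bracketR0_apply_zero] using hasDerivAt_const x (1 : ℂ)
  | succ k =>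
    rw [bracketR0_single_one_apply_succ]
    have hk : (k : ℂ) + 1 ≠ 0 := Nat.cast_add_one_ne_zero _
    refine ((hasDerivAt_pow ((k : ℕ) + 1) x).div_const (((k : ℕ) + 1).factorial : ℂ)).congr_deriv ?_
    rw [Nat.factorial_succ, expVec, Fin.val_castSucc, Nat.add_sub_cancel]
    push_cast
    field_simp

lemma span_range_expVec : Submodule.span ℂ (Set.range (expVec n)) = ⊤ := by
  by_contra hspan
  obtain ⟨f, hf, hle⟩ := Submodule.exists_le_ker_of_lt_top _ (lt_top_iff_ne_top.2 hspan)
  have hf_expVec (x : ℂ) : f (expVec n x) = 0 :=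
    hle (Submodule.subset_span (Set.mem_range_self x))
  have hsum (x : ℂ) :
      ∑ k : Fin (n + 1), x ^ (k : ℕ) * (f (Pi.single k 1) / (k : ℕ).factorial) = 0 := by
    rw [← hf_expVec x, pi_eq_sum_univ' (expVec n x), map_sum]
    refine Finset.sum_congr rfl fun k _ => ?_
    rw [map_smul, smul_eq_mul, expVec]
    ring
  have hinj : Function.Injective fun j : Fin (n + 1) => ((j : ℕ) : ℂ) :=
    Nat.cast_injective.comp Fin.val_injective
  have hcoeff := Matrix.eq_zero_of_forall_index_sum_pow_mul_eq_zero hinj fun j => hsum j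
  refine hf (LinearMap.pi_ext' fun k => LinearMap.ext_ring ?_)
  simpa [Nat.factorial_ne_zero] using congrFun hcoeff k

lemma map_bracketR0_of_map_expVec [NeZero n]
    {Φ : (Fin (n + 1) → ℂ) →ₗ[ℂ] (Fin (n + 1) → ℂ)} {α β : ℂ}
    (hΦ : ∀ x, Φ (expVec n x) = expVec n (α + β * x)) (u v : Fin (n + 1) → ℂ) :
    Φ (bracketR0 n u v) = bracketR0 n (Φ u) (Φ v) := by
  have map_deriv (x : ℂ) : Φ (bracketR0 n (expVec n x) (Pi.single 1 1)) =
      β • bracketR0 n (expVec n (α + β * x)) (Pi.single 1 1) := by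
    have hleft : HasDerivAt (fun y => Φ (expVec n y))
        (Φ (bracketR0 n (expVec n x) (Pi.single 1 1))) x :=
      Φ.toContinuousLinearMap.hasFDerivAt.comp_hasDerivAt x (hasDerivAt_expVec x)
    have haffine : HasDerivAt (fun y => α + β * y) β x := by
      simpa using ((hasDerivAt_id x).const_mul β).const_add α
    have hright : HasDerivAt (fun y => expVec n (α + β * y))
        (β • bracketR0 n (expVec n (α + β * x)) (Pi.single 1 1)) x :=
      (hasDerivAt_expVec (α + β * x)).scomp_of_eq x haffine rfl
    simp only [hΦ] at hleft
    exact hleft.unique hright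
  have hbilin : (bracketR0Bilin n).compr₂ Φ = (bracketR0Bilin n).compl₁₂ Φ Φ := by
    refine LinearMap.ext_on_range span_range_expVec fun x =>
      LinearMap.ext_on_range span_range_expVec fun y => ?_
    simp only [LinearMap.compr₂_apply, LinearMap.compl₁₂_apply, bracketR0Bilin,
      LinearMap.mk₂_apply]
    rw [hΦ, hΦ, bracketR0_expVec_expVec, bracketR0_expVec_expVec, map_smul, map_deriv, smul_smul]
    congr 1
    ring
  exact LinearMap.congr_fun₂ hbilin u v

namespace IsAutR0

variable {φ : (Fin (n + 1) → ℂ) →ₗ[ℂ] (Fin (n + 1) → ℂ)} {u : Fin (n + 1) → ℂ}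

lemma apply_zero_eq_zero [NeZero n] (hφ : IsAutR0 n φ) (hu : u 0 = 0) : φ u 0 = 0 := by
  obtain ⟨w, -, rfl⟩ := exists_bracketR0_single_one_eq hu
  rw [hφ.2, bracketR0_apply_zero]

lemma apply_one_eq_zero [NeZero n] (hφ : IsAutR0 n φ) (hu₀ : u 0 = 0) (hu₁ : u 1 = 0) :
    φ u 1 = 0 := by
  obtain ⟨w, hw, rfl⟩ := exists_bracketR0_single_one_eq hu₀
  rw [hφ.2, bracketR0_apply_one, hφ.apply_zero_eq_zero (hw.trans hu₁),
    hφ.apply_zero_eq_zero (by simp)]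
  ring

lemma single_one_apply_one_ne_zero [NeZero n] (hφ : IsAutR0 n φ) : φ (Pi.single 1 1) 1 ≠ 0 := by
  intro h₁
  have h₀ : φ (Pi.single 1 1) 0 = 0 := hφ.apply_zero_eq_zero (by simp)
  have hker : φ (Pi.single 1 1) = 0 := by
    rw [← bracketR0_single_zero_single_one, hφ.2, bracketR0_eq_zero_of_right _ h₀ h₁]
  simpa using (map_eq_zero_iff φ hφ.1.injective).1 hker

lemma single_zero_apply_zero [NeZero n] (hφ : IsAutR0 n φ) : φ (Pi.single 0 1) 0 = 1 := by
  have hbracket : bracketR0 n (φ (Pi.single 1 1)) (φ (Pi.single 0 1)) = -φ (Pi.single 1 1) := by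
    rw [← hφ.2, bracketR0_single_one_single_zero, map_neg]
  have hone := congrFun hbracket 1
  rw [bracketR0_apply_one, hφ.apply_zero_eq_zero (by simp), Pi.neg_apply] at hone
  apply mul_left_cancel₀ hφ.single_one_apply_one_ne_zero
  linear_combination -hone

lemma apply_zero [NeZero n] (hφ : IsAutR0 n φ) (u : Fin (n + 1) → ℂ) : φ u 0 = u 0 := by
  have hdiff : φ (u - u 0 • Pi.single 0 1) 0 = 0 := hφ.apply_zero_eq_zero (by simp)
  simpa [hφ.single_zero_apply_zero, sub_eq_zero] using hdiff

end IsAutR0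

/-- A linear map that agrees at each vector with some automorphism of `R₀`, depending on the
vector. -/
def IsLocalAutR0 (n : ℕ) (Φ : (Fin (n + 1) → ℂ) →ₗ[ℂ] (Fin (n + 1) → ℂ)) : Prop :=
  ∀ a, ∃ φ, IsAutR0 n φ ∧ Φ a = φ a

namespace IsLocalAutR0

variable {Φ : (Fin (n + 1) → ℂ) →ₗ[ℂ] (Fin (n + 1) → ℂ)}

lemma bijective (hΦ : IsLocalAutR0 n Φ) : Function.Bijective Φ := by
  have hinj : Function.Injective Φ := by
    rw [injective_iff_map_eq_zero]
    intro a ha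
    obtain ⟨φ, hφ, hΦφ⟩ := hΦ a
    exact (map_eq_zero_iff φ hφ.1.injective).1 (hΦφ.symm.trans ha)
  exact ⟨hinj, LinearMap.injective_iff_surjective.1 hinj⟩

lemma apply_one [NeZero n] (hΦ : IsLocalAutR0 n Φ) (u : Fin (n + 1) → ℂ) :
    Φ u 1 = Φ (Pi.single 0 1) 1 * u 0 + Φ (Pi.single 1 1) 1 * u 1 := by
  obtain ⟨φ, hφ, hΦφ⟩ := hΦ (u - u 0 • Pi.single 0 1 - u 1 • Pi.single 1 1)
  have htail : Φ (u - u 0 • Pi.single 0 1 - u 1 • Pi.single 1 1) 1 = 0 := by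
    rw [hΦφ]
    exact hφ.apply_one_eq_zero (by simp) (by simp)
  simp only [map_sub, map_smul, Pi.sub_apply, Pi.smul_apply, smul_eq_mul] at htail
  linear_combination htail

lemma map_expVec [NeZero n] (hΦ : IsLocalAutR0 n Φ) (x : ℂ) :
    Φ (expVec n x) = expVec n (Φ (Pi.single 0 1) 1 + Φ (Pi.single 1 1) 1 * x) := by
  have hone : Φ (expVec n x) 1 = Φ (Pi.single 0 1) 1 + Φ (Pi.single 1 1) 1 * x := by
    rw [hΦ.apply_one, expVec_apply_zero, expVec_apply_one, mul_one]
  obtain ⟨φ, hφ, hΦφ⟩ := hΦ (expVec n x)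
  rw [← hone, hΦφ]
  apply eq_expVec_of_bracketR0_self_eq_zero
  · rw [hφ.apply_zero, expVec_apply_zero]
  · rw [← hφ.2, bracketR0_expVec_expVec, sub_self, zero_smul, map_zero]

end IsLocalAutR0

theorem every_local_automorphism_of_R0_is_automorphism_general [NeZero n]
    {Φ : (Fin (n + 1) → ℂ) →ₗ[ℂ] (Fin (n + 1) → ℂ)} (hΦ : IsLocalAutR0 n Φ) : IsAutR0 n Φ :=
  ⟨hΦ.bijective, map_bracketR0_of_map_expVec hΦ.map_expVec⟩

/-- Every local automorphism of `R₀` is an automorphism. -/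
theorem every_local_automorphism_of_R0_is_automorphism
    (n : ℕ) (hn : 5 ≤ n)
    (Φ : (Fin (n + 1) → ℂ) →ₗ[ℂ] (Fin (n + 1) → ℂ))
    (hloc : ∀ a : Fin (n + 1) → ℂ, ∃ φ, IsAutR0 n φ ∧ Φ a = φ a) :
    IsAutR0 n Φ := by
  have : NeZero n := ⟨by omega⟩
  exact every_local_automorphism_of_R0_is_automorphism_general hloc
end

section
/- Let n ≥ 5. Every local automorphism of the (n+2)-dimensional complex solvable Leibniz algebra R_1 is an automorphism of R_1. -/
/-!
`R₁` is the `(n+2)`-dimensional complex solvable Leibniz algebra with basis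
`e_1, …, e_n, x, y` and nonzero products `[e_i, e_1] = e_{i+1}` for `2 ≤ i ≤ n-1`,
`[e_1, x] = e_1`, `[x, e_1] = -e_1`, `[e_i, x] = (i-1) • e_i` for `2 ≤ i ≤ n`,
`[e_i, y] = e_i` for `2 ≤ i ≤ n`.  We realize it on `Fin (n+2) → ℂ`, where
`x = Pi.single 0 1`, `e_i = Pi.single i 1` for `1 ≤ i ≤ n` and
`y = Pi.single (Fin.last (n+1)) 1`, the bracket being given coordinatewise.
-/

/-- The bracket of the Leibniz algebra `R₁` on `Fin (n+2) → ℂ`. -/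
def bracketR1 (n : ℕ) (u v : Fin (n + 2) → ℂ) : Fin (n + 2) → ℂ := fun k =>
  if k.val = 1 then u 1 * v 0 - u 0 * v 1
  else if 2 ≤ k.val ∧ k.val ≤ n then
    (if 3 ≤ k.val then u ⟨k.val - 1, lt_of_le_of_lt (Nat.sub_le _ _) k.isLt⟩ * v 1 else 0)
      + ((k.val : ℂ) - 1) * u k * v 0 + u k * v (Fin.last (n + 1))
  else 0

/-- An automorphism of `R₁`: a bijective `ℂ`-linear map preserving the bracket. -/
def IsAutR1 (n : ℕ) (φ : (Fin (n + 2) → ℂ) →ₗ[ℂ] (Fin (n + 2) → ℂ)) : Prop :=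
  Function.Bijective φ ∧ ∀ u v, φ (bracketR1 n u v) = bracketR1 n (φ u) (φ v)

/-!
The right annihilator of `R₁` is `V = ⟨e_2, …, e_n⟩` and its left annihilator is `ℂ y`, so an
automorphism `φ` preserves both; the remaining products then force `φ y = y`, `φ e_1 = a e_1` and
`φ x = x + c e_1`. Since `c` is the `e_1`-coordinate of `φ (x + v)` for every `v ∈ V`, a local
automorphism agrees on `x` and `v` simultaneously with one automorphism. After composing with an
automorphism we may thus assume that it fixes `x` and `e_2 + ⋯ + e_n`. The automorphisms fixing `x`
commute with `[·, x]`, whose eigenvalues on `V` are distinct, so the local automorphism is diagonal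
on `V` and therefore fixes `V` pointwise. If it maps `e_1` to `α e_1`, evaluating it at
`-α x + e_1 + e_2 + e_3` forces `α = 1`.
-/

local notation "𝐞[" k "]" => (Pi.single k 1 : Fin (_ + 2) → ℂ)

section

variable {n : ℕ} {u v : Fin (n + 2) → ℂ} {φ Φ : (Fin (n + 2) → ℂ) →ₗ[ℂ] (Fin (n + 2) → ℂ)}

@[elab_as_elim]
theorem cases_index_R1 {motive : Fin (n + 2) → Prop} (k : Fin (n + 2)) (zero : motive 0)
    (one : motive 1) (mid : ∀ k : Fin (n + 2), 2 ≤ k.val → k.val ≤ n → motive k)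
    (last : motive (Fin.last (n + 1))) : motive k := by
  obtain hk | hk | hk | hk : k.val = 0 ∨ k.val = 1 ∨ (2 ≤ k.val ∧ k.val ≤ n) ∨ k.val = n + 1 := by
    omega
  · rwa [show k = 0 from Fin.ext hk]
  · rwa [show k = 1 from Fin.ext hk]
  · exact mid k hk.1 hk.2
  · rwa [show k = Fin.last (n + 1) from Fin.ext hk]

theorem funext_R1 (zero : u 0 = v 0) (one : u 1 = v 1)
    (mid : ∀ k : Fin (n + 2), 2 ≤ k.val → k.val ≤ n → u k = v k)
    (last : u (Fin.last (n + 1)) = v (Fin.last (n + 1))) : u = v :=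
  funext fun k => cases_index_R1 k zero one mid last

@[simp]
theorem bracketR1_apply_zero (u v : Fin (n + 2) → ℂ) : bracketR1 n u v 0 = 0 := by
  simp [bracketR1]

@[simp]
theorem bracketR1_apply_one (u v : Fin (n + 2) → ℂ) :
    bracketR1 n u v 1 = u 1 * v 0 - u 0 * v 1 := by
  simp [bracketR1]

theorem bracketR1_apply_last (hn : 1 ≤ n) (u v : Fin (n + 2) → ℂ) :
    bracketR1 n u v (Fin.last (n + 1)) = 0 := by
  simp [bracketR1, Nat.ne_of_gt hn]

theorem bracketR1_apply_of_val_eq_two {k : Fin (n + 2)} (hn : 2 ≤ n) (hk : k.val = 2)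
    (u v : Fin (n + 2) → ℂ) :
    bracketR1 n u v k = u k * (v 0 + v (Fin.last (n + 1))) := by
  simp only [bracketR1, hk, hn]
  norm_num
  ring

theorem bracketR1_apply_of_val_eq_succ {j k : Fin (n + 2)} (hj : 2 ≤ j.val) (hk : k.val ≤ n)
    (hjk : k.val = j.val + 1) (u v : Fin (n + 2) → ℂ) :
    bracketR1 n u v k =
      u j * v 1 + u k * (((k.val : ℂ) - 1) * v 0 + v (Fin.last (n + 1))) := by
  have hpred : (⟨k.val - 1, lt_of_le_of_lt (Nat.sub_le _ _) k.isLt⟩ : Fin (n + 2)) = j :=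
    Fin.ext (by simp [hjk])
  rw [bracketR1, if_neg (by omega), if_pos ⟨by omega, hk⟩, if_pos (by omega), hpred]
  ring

theorem bracketR1_apply_of_one_eq_zero {k : Fin (n + 2)} (hk : 2 ≤ k.val) (hkn : k.val ≤ n)
    (u : Fin (n + 2) → ℂ) (hv : v 1 = 0) :
    bracketR1 n u v k = u k * (((k.val : ℂ) - 1) * v 0 + v (Fin.last (n + 1))) := by
  rw [bracketR1, if_neg (by omega), if_pos ⟨hk, hkn⟩, hv, mul_zero, ite_self]
  ring

theorem bracketR1_single_zero (n : ℕ) (v : Fin (n + 2) → ℂ) :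
    bracketR1 n 𝐞[0] v = -v 1 • 𝐞[1] := by
  ext i
  simp only [bracketR1, Pi.single_apply, Pi.smul_apply, smul_eq_mul, Fin.ext_iff, Fin.val_zero,
    Fin.val_one]
  grind

theorem bracketR1_single_one (n : ℕ) (v : Fin (n + 2) → ℂ) :
    bracketR1 n 𝐞[1] v = v 0 • 𝐞[1] := by
  ext i
  simp only [bracketR1, Pi.single_apply, Pi.smul_apply, smul_eq_mul, Fin.ext_iff, Fin.val_zero,
    Fin.val_one]
  grind

theorem bracketR1_single_last (hn : 1 ≤ n) (v : Fin (n + 2) → ℂ) :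
    bracketR1 n 𝐞[Fin.last (n + 1)] v = 0 := by
  ext i
  simp only [bracketR1, Pi.single_apply, Pi.zero_apply, Fin.ext_iff, Fin.val_zero, Fin.val_one,
    Fin.val_last]
  grind

theorem bracketR1_single_of_one_eq_zero {k : Fin (n + 2)} (hk : 2 ≤ k.val) (hkn : k.val ≤ n)
    (hv : v 1 = 0) :
    bracketR1 n 𝐞[k] v = (((k.val : ℂ) - 1) * v 0 + v (Fin.last (n + 1))) • 𝐞[k] := by
  ext i
  simp only [bracketR1, Pi.single_apply, Pi.smul_apply, smul_eq_mul, Fin.ext_iff, Fin.val_zero,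
    Fin.val_one]
  grind

theorem bracketR1_single_single_one_of_val_eq_succ {j k : Fin (n + 2)} (hj : 2 ≤ j.val)
    (hk : k.val ≤ n) (hjk : k.val = j.val + 1) : bracketR1 n 𝐞[j] 𝐞[1] = 𝐞[k] := by
  ext i
  simp only [bracketR1, Pi.single_apply, Fin.ext_iff, Fin.val_zero, Fin.val_one, Fin.val_last]
  grind

theorem bracketR1_single_of_val_eq {k : Fin (n + 2)} (hn : 2 ≤ n) (hk : k.val = n)
    (v : Fin (n + 2) → ℂ) :
    bracketR1 n 𝐞[k] v = (((n : ℂ) - 1) * v 0 + v (Fin.last (n + 1))) • 𝐞[k] := by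
  ext i
  simp only [bracketR1, Pi.single_apply, Pi.smul_apply, smul_eq_mul, Fin.ext_iff, Fin.val_zero,
    Fin.val_one]
  grind

theorem bracketR1_smul_left (c : ℂ) (u v : Fin (n + 2) → ℂ) :
    bracketR1 n (c • u) v = c • bracketR1 n u v := by
  ext i
  simp only [bracketR1, Pi.smul_apply, smul_eq_mul]
  split_ifs <;> ring

/-- The right annihilator of `R₁`. For `2 ≤ n` it is spanned by `e_2, …, e_n`, see
`mem_rightAnnR1_iff`. -/
def rightAnnR1 (n : ℕ) : Set (Fin (n + 2) → ℂ) :=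
  {v | ∀ u, bracketR1 n u v = 0}

theorem mem_rightAnnR1_iff (hn : 2 ≤ n) :
    v ∈ rightAnnR1 n ↔ v 0 = 0 ∧ v 1 = 0 ∧ v (Fin.last (n + 1)) = 0 := by
  refine ⟨fun hv => ?_, fun ⟨h0, h1, hlast⟩ u => ?_⟩
  · have h0 : v 0 = 0 := by simpa [bracketR1_single_one] using congrFun (hv 𝐞[1]) 1
    have h1 : v 1 = 0 := by simpa [bracketR1_single_zero] using congrFun (hv 𝐞[0]) 1
    let two : Fin (n + 2) := ⟨2, by omega⟩
    have h2 := congrFun (hv 𝐞[two]) two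
    rw [bracketR1_single_of_one_eq_zero le_rfl hn h1] at h2
    exact ⟨h0, h1, by simpa [h0] using h2⟩
  · refine funext_R1 ?_ ?_ (fun k hk hkn => ?_) ?_
    · simp
    · simp [h0, h1]
    · simp [bracketR1_apply_of_one_eq_zero hk hkn u h1, h0, hlast]
    · simp [bracketR1_apply_last (by omega : 1 ≤ n)]

theorem single_mem_rightAnnR1 {k : Fin (n + 2)} (hk : 2 ≤ k.val) (hkn : k.val ≤ n) :
    𝐞[k] ∈ rightAnnR1 n := by
  rw [mem_rightAnnR1_iff (by omega)]
  simp only [Pi.single_apply, Fin.ext_iff, Fin.val_zero, Fin.val_one, Fin.val_last]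
  grind

theorem one_ne_last (hn : 1 ≤ n) : (1 : Fin (n + 2)) ≠ Fin.last (n + 1) :=
  Fin.ne_of_val_ne (by simpa using Nat.ne_of_gt hn)

theorem single_last_apply_one (hn : 1 ≤ n) : 𝐞[Fin.last (n + 1)] (1 : Fin (n + 2)) = 0 :=
  Pi.single_eq_of_ne (one_ne_last hn) 1

theorem single_one_apply_last (hn : 1 ≤ n) : 𝐞[1] (Fin.last (n + 1)) = 0 :=
  Pi.single_eq_of_ne (one_ne_last hn).symm 1

theorem eq_add_add_of_apply_eq_zero (hn : 1 ≤ n)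
    (hu : ∀ k : Fin (n + 2), 2 ≤ k.val → k.val ≤ n → u k = 0) :
    u = u 0 • 𝐞[0] + u 1 • 𝐞[1] + u (Fin.last (n + 1)) • 𝐞[Fin.last (n + 1)] := by
  refine funext_R1 ?_ ?_ (fun k hk hkn => ?_) ?_ <;>
    simp only [Pi.add_apply, Pi.smul_apply, smul_eq_mul, Pi.single_apply, Fin.ext_iff,
      Fin.val_zero, Fin.val_one, Fin.val_last] <;>
    grind

theorem eq_smul_single_of_mem_rightAnnR1 {k : Fin (n + 2)} (hn : 2 ≤ n) (hu : u ∈ rightAnnR1 n)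
    (h : ∀ j : Fin (n + 2), 2 ≤ j.val → j.val ≤ n → j ≠ k → u j = 0) : u = u k • 𝐞[k] := by
  obtain ⟨h0, h1, hlast⟩ := (mem_rightAnnR1_iff hn).1 hu
  refine funext_R1 ?_ ?_ (fun j hj hjn => ?_) ?_ <;>
    simp only [Pi.smul_apply, smul_eq_mul, Pi.single_apply] <;>
    grind

theorem eq_smul_single_last_of_forall_bracketR1_eq_zero (hn : 1 ≤ n)
    (h : ∀ v, bracketR1 n u v = 0) :
    u = u (Fin.last (n + 1)) • 𝐞[Fin.last (n + 1)] := by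
  have h0 : u 0 = 0 := by simpa using congrFun (h 𝐞[1]) 1
  have h1 : u 1 = 0 := by simpa using congrFun (h 𝐞[0]) 1
  have hmid : ∀ k : Fin (n + 2), 2 ≤ k.val → k.val ≤ n → u k = 0 := fun k hk hkn => by
    have hk0 := congrFun (h 𝐞[Fin.last (n + 1)]) k
    rw [bracketR1_apply_of_one_eq_zero hk hkn u (single_last_apply_one hn)] at hk0
    simpa using hk0
  simpa [h0, h1] using eq_add_add_of_apply_eq_zero hn hmid

namespace IsAutR1

theorem map_mem_rightAnnR1 (hφ : IsAutR1 n φ) (hv : v ∈ rightAnnR1 n) : φ v ∈ rightAnnR1 n :=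
  hφ.1.surjective.forall.2 fun u => by rw [← hφ.2, hv u, map_zero]

theorem map_single_ne_zero (hφ : IsAutR1 n φ) (k : Fin (n + 2)) : φ 𝐞[k] ≠ 0 := fun h =>
  one_ne_zero (Pi.single_eq_zero_iff.1 ((map_eq_zero_iff φ hφ.1.injective).1 h))

theorem exists_map_single_last_eq_smul (hn : 1 ≤ n) (hφ : IsAutR1 n φ) :
    ∃ t : ℂ, t ≠ 0 ∧ φ 𝐞[Fin.last (n + 1)] = t • 𝐞[Fin.last (n + 1)] := by
  have h : φ 𝐞[Fin.last (n + 1)] = _ := eq_smul_single_last_of_forall_bracketR1_eq_zero hn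
    (hφ.1.surjective.forall.2 fun v => by rw [← hφ.2, bracketR1_single_last hn, map_zero])
  exact ⟨_, fun h0 => hφ.map_single_ne_zero _ (by rw [h, h0, zero_smul]), h⟩

theorem map_apply_eq_zero_of_bracketR1_single_last (hφ : IsAutR1 n φ)
    (hv : bracketR1 n v 𝐞[Fin.last (n + 1)] = 0) {k : Fin (n + 2)} (hk : 2 ≤ k.val)
    (hkn : k.val ≤ n) : φ v k = 0 := by
  have hn : 1 ≤ n := by omega
  obtain ⟨t, ht, hy⟩ := hφ.exists_map_single_last_eq_smul hn
  have h : bracketR1 n (φ v) (t • 𝐞[Fin.last (n + 1)]) k = 0 := by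
    rw [← hy, ← hφ.2, hv, map_zero, Pi.zero_apply]
  rw [bracketR1_apply_of_one_eq_zero hk hkn _ (by simp [single_last_apply_one hn])] at h
  simpa [ht] using h

theorem exists_map_single_one (hn : 1 ≤ n) (hφ : IsAutR1 n φ) :
    ∃ a : ℂ, a ≠ 0 ∧ φ 𝐞[1] = a • 𝐞[1] := by
  have hx : φ 𝐞[1] = bracketR1 n (φ 𝐞[1]) (φ 𝐞[0]) := by
    rw [← hφ.2, bracketR1_single_one, Pi.single_eq_same, one_smul]
  have h0 : φ 𝐞[1] 0 = 0 := by rw [hx, bracketR1_apply_zero]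
  have hlast : φ 𝐞[1] (Fin.last (n + 1)) = 0 := by rw [hx, bracketR1_apply_last hn]
  have h := eq_add_add_of_apply_eq_zero hn fun k =>
    hφ.map_apply_eq_zero_of_bracketR1_single_last (v := 𝐞[1]) (k := k)
      (by simp [bracketR1_single_one])
  rw [h0, hlast, zero_smul, zero_smul, zero_add, add_zero] at h
  exact ⟨_, fun ha => hφ.map_single_ne_zero _ (by rw [h, ha, zero_smul]), h⟩

theorem exists_map_single_of_val_eq (hn : 2 ≤ n) (hφ : IsAutR1 n φ) {k : Fin (n + 2)}
    (hk : k.val = n) : ∃ b : ℂ, b ≠ 0 ∧ φ 𝐞[k] = b • 𝐞[k] := by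
  obtain ⟨a, ha, h1⟩ := hφ.exists_map_single_one (by omega)
  have hann : bracketR1 n (φ 𝐞[k]) (a • 𝐞[1]) = 0 := by
    rw [← h1, ← hφ.2, bracketR1_single_of_val_eq hn hk]
    simp [single_one_apply_last (by omega : 1 ≤ n)]
  have hmem := hφ.map_mem_rightAnnR1 (single_mem_rightAnnR1 (k := k) (by omega) hk.le)
  have h : φ 𝐞[k] = _ := eq_smul_single_of_mem_rightAnnR1 (k := k) hn hmem fun j hj hjn hjk => by
    have hsuccn : j.val + 1 ≤ n := by have := Fin.val_ne_of_ne hjk; omega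
    have hsucc := congrFun hann ⟨j.val + 1, by omega⟩
    rw [bracketR1_apply_of_val_eq_succ hj hsuccn rfl] at hsucc
    simpa [ha, single_one_apply_last (by omega : 1 ≤ n)] using hsucc
  exact ⟨_, fun hb => hφ.map_single_ne_zero _ (by rw [h, hb, zero_smul]), h⟩

theorem map_single_last (hn : 2 ≤ n) (hφ : IsAutR1 n φ) :
    φ 𝐞[Fin.last (n + 1)] = 𝐞[Fin.last (n + 1)] := by
  let m : Fin (n + 2) := ⟨n, by omega⟩
  obtain ⟨t, -, hy⟩ := hφ.exists_map_single_last_eq_smul (by omega)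
  obtain ⟨b, hb, hm⟩ := hφ.exists_map_single_of_val_eq (k := m) hn rfl
  have h : b • t • 𝐞[m] = b • 𝐞[m] := by
    have := hφ.2 𝐞[m] 𝐞[Fin.last (n + 1)]
    rw [hy, hm, bracketR1_smul_left, bracketR1_single_of_val_eq hn rfl,
      bracketR1_single_of_val_eq hn rfl] at this
    simpa [hm] using this.symm
  have ht : t = 1 := by simpa [hb] using congrFun h m
  rw [hy, ht, one_smul]

theorem exists_map_single_zero (hn : 2 ≤ n) (hφ : IsAutR1 n φ) :
    ∃ c : ℂ, φ 𝐞[0] = 𝐞[0] + c • 𝐞[1] := by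
  let m : Fin (n + 2) := ⟨n, by omega⟩
  obtain ⟨a, ha, h1⟩ := hφ.exists_map_single_one (by omega)
  obtain ⟨b, hb, hm⟩ := hφ.exists_map_single_of_val_eq (k := m) hn rfl
  have h0 : φ 𝐞[0] 0 = 1 := by
    have := hφ.2 𝐞[1] 𝐞[0]
    rw [h1, bracketR1_smul_left, bracketR1_single_one, bracketR1_single_one, map_smul, h1] at this
    simpa [ha] using congrFun this.symm 1
  have hlast : φ 𝐞[0] (Fin.last (n + 1)) = 0 := by
    have := hφ.2 𝐞[m] 𝐞[0]
    rw [hm, bracketR1_smul_left, bracketR1_single_of_val_eq hn rfl,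
      bracketR1_single_of_val_eq hn rfl, map_smul, hm] at this
    have hbm : ((n : ℂ) - 1) * b = b * (n - 1 + φ 𝐞[0] (Fin.last (n + 1))) := by
      simpa [h0] using congrFun this m
    refine (mul_eq_zero.1 ?_).resolve_left hb
    linear_combination -hbm
  have h := eq_add_add_of_apply_eq_zero (by omega) fun k =>
    hφ.map_apply_eq_zero_of_bracketR1_single_last (v := 𝐞[0]) (k := k)
      (by simp [bracketR1_single_zero, single_last_apply_one (by omega : 1 ≤ n)])
  rw [h0, hlast, one_smul, zero_smul, add_zero] at h
  exact ⟨_, h⟩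

theorem map_single_eq_smul (hφ : IsAutR1 n φ) (h0 : φ 𝐞[0] = 𝐞[0])
    {k : Fin (n + 2)} (hk : 2 ≤ k.val) (hkn : k.val ≤ n) : φ 𝐞[k] = φ 𝐞[k] k • 𝐞[k] := by
  refine eq_smul_single_of_mem_rightAnnR1 (hk.trans hkn)
    (hφ.map_mem_rightAnnR1 (single_mem_rightAnnR1 hk hkn)) fun j hj hjn hjk => ?_
  have hne : (k.val : ℂ) - j.val ≠ 0 := sub_ne_zero.2 (mod_cast Fin.val_ne_of_ne hjk.symm)
  have hx := congrFun (hφ.2 𝐞[k] 𝐞[0]) j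
  rw [bracketR1_single_of_one_eq_zero hk hkn (by simp), h0,
    bracketR1_apply_of_one_eq_zero hj hjn _ (by simp)] at hx
  have hcoeff : ((k.val : ℂ) - 1) * φ 𝐞[k] j = φ 𝐞[k] j * (j.val - 1) := by simpa using hx
  refine (mul_eq_zero.1 ?_).resolve_left hne
  linear_combination hcoeff

theorem map_single_apply_succ (hφ : IsAutR1 n φ) {c : ℂ}
    (h0 : φ 𝐞[0] = 𝐞[0] + c • 𝐞[1]) {j k : Fin (n + 2)} (hj : 2 ≤ j.val) (hk : k.val ≤ n)
    (hjk : k.val = j.val + 1) : φ 𝐞[j] k = -c * φ 𝐞[j] j := by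
  have hx := congrFun (hφ.2 𝐞[j] 𝐞[0]) k
  rw [bracketR1_single_of_one_eq_zero hj (by omega) (by simp), h0,
    bracketR1_apply_of_val_eq_succ hj hk hjk] at hx
  have hcoeff : ((j.val : ℂ) - 1) * φ 𝐞[j] k = φ 𝐞[j] j * c + φ 𝐞[j] k * j.val := by
    simpa [hjk, single_one_apply_last (by omega : 1 ≤ n)] using hx
  linear_combination -hcoeff

theorem map_single_succ_apply (hφ : IsAutR1 n φ) {a : ℂ} (h1 : φ 𝐞[1] = a • 𝐞[1])
    {j k : Fin (n + 2)} (hj : 2 ≤ j.val) (hk : k.val ≤ n) (hjk : k.val = j.val + 1) :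
    φ 𝐞[k] k = a * φ 𝐞[j] j := by
  rw [← bracketR1_single_single_one_of_val_eq_succ hj hk hjk, hφ.2, h1,
    bracketR1_apply_of_val_eq_succ hj hk hjk]
  simp [single_one_apply_last (by omega : 1 ≤ n), mul_comm]

theorem map_single_three_apply_two (hφ : IsAutR1 n φ) {a : ℂ} (h1 : φ 𝐞[1] = a • 𝐞[1])
    (hn : 3 ≤ n) {j k : Fin (n + 2)} (hj : j.val = 2) (hk : k.val = 3) : φ 𝐞[k] j = 0 := by
  rw [← bracketR1_single_single_one_of_val_eq_succ hj.ge (by omega) (by omega : k.val = j.val + 1),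
    hφ.2, h1, bracketR1_apply_of_val_eq_two (by omega) hj]
  simp [single_one_apply_last (by omega : 1 ≤ n)]

theorem exists_leftInverse (hφ : IsAutR1 n φ) :
    ∃ ψ, IsAutR1 n ψ ∧ Function.LeftInverse ψ φ := by
  let e := LinearEquiv.ofBijective φ hφ.1
  refine ⟨e.symm, ⟨e.symm.bijective, fun u v => ?_⟩, e.symm_apply_apply⟩
  apply e.injective
  simp [e, hφ.2]

theorem comp {ψ : (Fin (n + 2) → ℂ) →ₗ[ℂ] (Fin (n + 2) → ℂ)} (hψ : IsAutR1 n ψ)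
    (hφ : IsAutR1 n φ) : IsAutR1 n (ψ ∘ₗ φ) :=
  ⟨hψ.1.comp hφ.1, fun u v => by simp only [LinearMap.comp_apply, hφ.2, hψ.2]⟩

end IsAutR1

/-- A local automorphism of `R₁`: a linear map which agrees at each point with an automorphism,
possibly depending on the point. -/
def IsLocalAutR1 (n : ℕ) (Φ : (Fin (n + 2) → ℂ) →ₗ[ℂ] (Fin (n + 2) → ℂ)) : Prop :=
  ∀ a, ∃ φ, IsAutR1 n φ ∧ Φ a = φ a

/-- The sum `e_2 + ⋯ + e_n` of the basis vectors spanning the right annihilator of `R₁`. -/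
def rightAnnSumR1 (n : ℕ) : Fin (n + 2) → ℂ :=
  ∑ k with 2 ≤ k.val ∧ k.val ≤ n, 𝐞[k]

theorem rightAnnSumR1_mem_rightAnnR1 (hn : 2 ≤ n) : rightAnnSumR1 n ∈ rightAnnR1 n := by
  simp only [mem_rightAnnR1_iff hn, rightAnnSumR1, Finset.sum_apply]
  refine ⟨?_, ?_, ?_⟩ <;> refine Finset.sum_eq_zero fun k hk => ?_ <;>
    obtain ⟨hk, hkn⟩ := (Finset.mem_filter.1 hk).2 <;>
    have := (mem_rightAnnR1_iff hn).1 (single_mem_rightAnnR1 hk hkn)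
  exacts [this.1, this.2.1, this.2.2]

namespace IsLocalAutR1

theorem comp_left {ψ : (Fin (n + 2) → ℂ) →ₗ[ℂ] (Fin (n + 2) → ℂ)} (hψ : IsAutR1 n ψ)
    (hΦ : IsLocalAutR1 n Φ) : IsLocalAutR1 n (ψ ∘ₗ Φ) := by
  intro a
  obtain ⟨φ, hφ, ha⟩ := hΦ a
  exact ⟨ψ ∘ₗ φ, hψ.comp hφ, congrArg ψ ha⟩

theorem map_mem_rightAnnR1 (hΦ : IsLocalAutR1 n Φ) (hv : v ∈ rightAnnR1 n) :
    Φ v ∈ rightAnnR1 n := by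
  obtain ⟨φ, hφ, hv'⟩ := hΦ v
  exact hv' ▸ hφ.map_mem_rightAnnR1 hv

theorem map_single_last (hn : 2 ≤ n) (hΦ : IsLocalAutR1 n Φ) :
    Φ 𝐞[Fin.last (n + 1)] = 𝐞[Fin.last (n + 1)] := by
  obtain ⟨φ, hφ, hy⟩ := hΦ 𝐞[Fin.last (n + 1)]
  rw [hy, hφ.map_single_last hn]

theorem exists_map_single_one (hn : 1 ≤ n) (hΦ : IsLocalAutR1 n Φ) :
    ∃ α : ℂ, Φ 𝐞[1] = α • 𝐞[1] := by
  obtain ⟨φ, hφ, h1⟩ := hΦ 𝐞[1]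
  obtain ⟨α, -, hα⟩ := hφ.exists_map_single_one hn
  exact ⟨α, h1.trans hα⟩

theorem exists_map_single_zero (hn : 2 ≤ n) (hΦ : IsLocalAutR1 n Φ) :
    ∃ c : ℂ, Φ 𝐞[0] = 𝐞[0] + c • 𝐞[1] := by
  obtain ⟨φ, hφ, h0⟩ := hΦ 𝐞[0]
  obtain ⟨c, hc⟩ := hφ.exists_map_single_zero hn
  exact ⟨c, h0.trans hc⟩

theorem exists_isAutR1_eq (hn : 2 ≤ n) (hΦ : IsLocalAutR1 n Φ) (hv : v ∈ rightAnnR1 n) :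
    ∃ φ, IsAutR1 n φ ∧ Φ 𝐞[0] = φ 𝐞[0] ∧ Φ v = φ v := by
  obtain ⟨φ, hφ, h⟩ := hΦ (𝐞[0] + v)
  obtain ⟨c, hc⟩ := hΦ.exists_map_single_zero hn
  obtain ⟨d, hd⟩ := hφ.exists_map_single_zero hn
  rw [map_add, map_add] at h
  have hcd : c = d := by
    have hΦv := ((mem_rightAnnR1_iff hn).1 (hΦ.map_mem_rightAnnR1 hv)).2.1
    have hφv := ((mem_rightAnnR1_iff hn).1 (hφ.map_mem_rightAnnR1 hv)).2.1
    simpa [hc, hd, hΦv, hφv] using congrFun h 1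
  have h0 : Φ 𝐞[0] = φ 𝐞[0] := by rw [hc, hd, hcd]
  exact ⟨φ, hφ, h0, add_left_cancel (h0 ▸ h)⟩

theorem map_single_eq_smul (hΦ : IsLocalAutR1 n Φ) (h0 : Φ 𝐞[0] = 𝐞[0])
    {k : Fin (n + 2)} (hk : 2 ≤ k.val) (hkn : k.val ≤ n) : Φ 𝐞[k] = Φ 𝐞[k] k • 𝐞[k] := by
  obtain ⟨φ, hφ, hφ0, hφk⟩ := hΦ.exists_isAutR1_eq (hk.trans hkn) (single_mem_rightAnnR1 hk hkn)
  rw [hφk]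
  exact hφ.map_single_eq_smul (hφ0.symm.trans h0) hk hkn

theorem map_single_eq_self (hΦ : IsLocalAutR1 n Φ) (h0 : Φ 𝐞[0] = 𝐞[0])
    (hsum : Φ (rightAnnSumR1 n) = rightAnnSumR1 n) {k : Fin (n + 2)} (hk : 2 ≤ k.val)
    (hkn : k.val ≤ n) : Φ 𝐞[k] = 𝐞[k] := by
  have hsum_diag : ∑ i with 2 ≤ i.val ∧ i.val ≤ n, Φ 𝐞[i] i • 𝐞[i] = rightAnnSumR1 n := by
    rw [← hsum, rightAnnSumR1, map_sum]
    refine Finset.sum_congr rfl fun i hi => ?_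
    obtain ⟨hi, hin⟩ := (Finset.mem_filter.1 hi).2
    exact (hΦ.map_single_eq_smul h0 hi hin).symm
  have hcoeff : Φ 𝐞[k] k = 1 := by
    simpa [rightAnnSumR1, Finset.sum_apply, Pi.single_apply, hk, hkn] using congrFun hsum_diag k
  rw [hΦ.map_single_eq_smul h0 hk hkn, hcoeff, one_smul]

theorem map_single_one_eq_self (hn : 3 ≤ n) (hΦ : IsLocalAutR1 n Φ) (h0 : Φ 𝐞[0] = 𝐞[0])
    (hmid : ∀ k : Fin (n + 2), 2 ≤ k.val → k.val ≤ n → Φ 𝐞[k] = 𝐞[k]) : Φ 𝐞[1] = 𝐞[1] := by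
  let two : Fin (n + 2) := ⟨2, by omega⟩
  let three : Fin (n + 2) := ⟨3, by omega⟩
  obtain ⟨α, hα⟩ := hΦ.exists_map_single_one (by omega)
  obtain ⟨φ, hφ, h⟩ := hΦ (-α • 𝐞[0] + 𝐞[1] + 𝐞[two] + 𝐞[three])
  obtain ⟨a, ha0, ha⟩ := hφ.exists_map_single_one (by omega)
  obtain ⟨c, hc⟩ := hφ.exists_map_single_zero (by omega)
  have h_eq : -α • 𝐞[0] + α • 𝐞[1] + 𝐞[two] + 𝐞[three] =
      -α • (𝐞[0] + c • 𝐞[1]) + a • 𝐞[1] + φ 𝐞[two] + φ 𝐞[three] := by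
    simpa only [map_add, map_smul, h0, hα, ha, hc, hmid two le_rfl (by omega : 2 ≤ n),
      hmid three (Nat.le_succ 2) hn] using h
  have htwo := (mem_rightAnnR1_iff (by omega)).1 <|
    hφ.map_mem_rightAnnR1 (single_mem_rightAnnR1 (k := two) le_rfl (by omega : 2 ≤ n))
  have hthree := (mem_rightAnnR1_iff (by omega)).1 <|
    hφ.map_mem_rightAnnR1 (single_mem_rightAnnR1 (k := three) (Nat.le_succ 2) hn)
  have coeff_one : α = -(α * c) + a := by
    simpa [htwo, hthree, two, three, Pi.single_apply, Fin.ext_iff] using congrFun h_eq 1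
  have coeff_two : 1 = φ 𝐞[two] two := by
    simpa [hφ.map_single_three_apply_two ha hn (j := two) (k := three) rfl rfl, two, three,
      Pi.single_apply, Fin.ext_iff] using congrFun h_eq two
  have coeff_three : 1 = -c * φ 𝐞[two] two + a * φ 𝐞[two] two := by
    rw [← hφ.map_single_apply_succ hc (j := two) (k := three) le_rfl hn rfl,
      ← hφ.map_single_succ_apply ha (j := two) (k := three) le_rfl hn rfl]
    simpa [two, three, Pi.single_apply, Fin.ext_iff] using congrFun h_eq three
  rw [← coeff_two] at coeff_three
  have hαa : a * α = a * 1 := by linear_combination coeff_one - α * coeff_three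
  rw [hα, mul_left_cancel₀ ha0 hαa, one_smul]

theorem eq_id (hn : 3 ≤ n) (hΦ : IsLocalAutR1 n Φ) (h0 : Φ 𝐞[0] = 𝐞[0])
    (hsum : Φ (rightAnnSumR1 n) = rightAnnSumR1 n) : Φ = LinearMap.id := by
  have hmid : ∀ k : Fin (n + 2), 2 ≤ k.val → k.val ≤ n → Φ 𝐞[k] = 𝐞[k] :=
    fun k => hΦ.map_single_eq_self h0 hsum
  refine (Pi.basisFun ℂ (Fin (n + 2))).ext fun k => ?_
  simp only [Pi.basisFun_apply, LinearMap.id_apply]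
  induction k using cases_index_R1 with
  | zero => exact h0
  | one => exact hΦ.map_single_one_eq_self hn h0 hmid
  | mid k hk hkn => exact hmid k hk hkn
  | last => exact hΦ.map_single_last (by omega)

end IsLocalAutR1

end

theorem every_local_automorphism_of_R1_is_automorphism_general
    (n : ℕ) (hn : 3 ≤ n)
    (Φ : (Fin (n + 2) → ℂ) →ₗ[ℂ] (Fin (n + 2) → ℂ))
    (hΦ : IsLocalAutR1 n Φ) :
    IsAutR1 n Φ := by
  have hn2 : 2 ≤ n := by omega
  obtain ⟨φ, hφ, h0, hsum⟩ := hΦ.exists_isAutR1_eq hn2 (rightAnnSumR1_mem_rightAnnR1 hn2)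
  obtain ⟨ψ, hψ, hψφ⟩ := hφ.exists_leftInverse
  have hid : ψ ∘ₗ Φ = LinearMap.id :=
    (hΦ.comp_left hψ).eq_id hn ((congrArg ψ h0).trans (hψφ _)) ((congrArg ψ hsum).trans (hψφ _))
  have hΦφ : Φ = φ :=
    LinearMap.ext fun a => hψ.1.injective ((LinearMap.congr_fun hid a).trans (hψφ a).symm)
  exact hΦφ ▸ hφ

/-- Every local automorphism of `R1` is an automorphism. -/
theorem every_local_automorphism_of_R1_is_automorphism
    (n : ℕ) (hn : 5 ≤ n)
    (Φ : (Fin (n + 2) → ℂ) →ₗ[ℂ] (Fin (n + 2) → ℂ))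
    (hloc : ∀ a : Fin (n + 2) → ℂ, ∃ φ, IsAutR1 n φ ∧ Φ a = φ a) :
    IsAutR1 n Φ := by
  exact every_local_automorphism_of_R1_is_automorphism_general n (by omega) Φ hloc
end

section
/- Let n ≥ 5. Every local automorphism of the (n+2)-dimensional complex solvable Leibniz algebra R_2 is an automorphism of R_2. -/
/-!
`R₂` is the `(n+2)`-dimensional complex solvable Leibniz algebra with basis
`e_1, …, e_n, x, y` and nonzero products `[e_1, e_1] = e_3`,
`[e_i, e_1] = e_{i+1}` for `3 ≤ i ≤ n-1`, `[e_1, x] = e_1`, `[x, e_1] = -e_1`,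
`[e_i, x] = (i-1) • e_i` for `3 ≤ i ≤ n`, `[e_2, y] = e_2`, `[y, e_2] = -e_2`.
We realize it on `Fin (n+2) → ℂ`, where `x = Pi.single 0 1`,
`e_i = Pi.single i 1` for `1 ≤ i ≤ n` and `y = Pi.single (Fin.last (n+1)) 1`,
the bracket being given coordinatewise.
-/

/-- The bracket of the Leibniz algebra `R₂` on `Fin (n+2) → ℂ`. -/
def bracketR2 (n : ℕ) (u v : Fin (n + 2) → ℂ) : Fin (n + 2) → ℂ := fun k =>
  if k.val = 1 then u 1 * v 0 - u 0 * v 1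
  else if k.val = 2 then u 2 * v (Fin.last (n + 1)) - u (Fin.last (n + 1)) * v 2
  else if 3 ≤ k.val ∧ k.val ≤ n then
    (if 4 ≤ k.val then u ⟨k.val - 1, lt_of_le_of_lt (Nat.sub_le _ _) k.isLt⟩ * v 1
      else u 1 * v 1)
      + ((k.val : ℂ) - 1) * u k * v 0
  else 0

/-- An automorphism of `R₂`: a bijective `ℂ`-linear map preserving the bracket. -/
def IsAutR2 (n : ℕ) (φ : (Fin (n + 2) → ℂ) →ₗ[ℂ] (Fin (n + 2) → ℂ)) : Prop :=
  Function.Bijective φ ∧ ∀ u v, φ (bracketR2 n u v) = bracketR2 n (φ u) (φ v)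

/-!
Up to the signs of `x` and `y`, `R₂` is the direct sum of the algebras `ℂ[z]/(zⁿ)` and `ℂ[w]/(w²)`
with bracket `[f, g] = g₁ z f - g₀ z f'`: here `1, z, …, zⁿ⁻¹` are `-x, e_1, e_3, …, e_n`, and
`1, w` are `-y, e_2`.

The elements of square zero with `x`-coordinate `-1` are the `E(c, p, q) = e^{cz} + p e_2 + q y`.
Since `∂E/∂c = [E, e_1]`, their span is stable under right multiplication by `e_1`, and hence it is
all of `R₂`. A local automorphism `Φ` preserves the condition `[v, v] = 0` and acts on the
coordinates `x, e_1` and `e_2, y` by triangular matrices, so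
`Φ E(c, p, q) = E(a c - b, β p + γ q, q)`. Differentiating in `c` gives `Φ [E, e_1] = a [Φ E, e_1]`,
and `[E, E'] = (c' - c) [E, e_1] + (p q' - q p') e_2` then shows that `Φ` preserves brackets.
-/

section Bracket

variable {n : ℕ}

/-- The position preceding `k` in the chain `e_1, e_3, e_4, …, e_n`, meaningful for `3 ≤ k`:
right multiplication by `e_1` moves `e_{prevIndex k}` to `e_k`. -/
def prevIndex (k : Fin (n + 2)) : Fin (n + 2) :=
  if 4 ≤ k.val then ⟨k.val - 1, lt_of_le_of_lt (Nat.sub_le _ _) k.isLt⟩ else 1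

theorem val_prevIndex (k : Fin (n + 2)) :
    (prevIndex k).val = if 4 ≤ k.val then k.val - 1 else 1 := by
  rw [prevIndex]
  split_ifs
  · rfl
  · exact Fin.val_one n

theorem prevIndex_lt {k : Fin (n + 2)} (hk : 3 ≤ k.val) : prevIndex k < k := by
  rw [Fin.lt_def, val_prevIndex]
  split_ifs <;> omega

theorem val_two (hn : 1 ≤ n) : (2 : Fin (n + 2)).val = 2 :=
  Nat.mod_eq_of_lt (show 2 < n + 2 by omega)

theorem val_three (hn : 2 ≤ n) : (3 : Fin (n + 2)).val = 3 :=
  Nat.mod_eq_of_lt (show 3 < n + 2 by omega)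

theorem last_ne_one (hn : 1 ≤ n) : Fin.last (n + 1) ≠ 1 := by
  rw [Ne, Fin.ext_iff, Fin.val_last, Fin.val_one]
  omega

theorem last_ne_two (hn : 2 ≤ n) : Fin.last (n + 1) ≠ 2 := by
  rw [Ne, Fin.ext_iff, Fin.val_last, val_two (by omega)]
  omega

theorem index_cases (hn : 1 ≤ n) (k : Fin (n + 2)) :
    k = 0 ∨ k = 1 ∨ k = 2 ∨ k = Fin.last (n + 1) ∨ 3 ≤ k.val ∧ k.val ≤ n := by
  have := k.isLt
  simp only [Fin.ext_iff, val_two hn, Fin.val_zero, Fin.val_one, Fin.val_last]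
  omega

@[simp]
theorem bracketR2_apply_zero (u v : Fin (n + 2) → ℂ) : bracketR2 n u v 0 = 0 := by
  simp [bracketR2]

@[simp]
theorem bracketR2_apply_one (u v : Fin (n + 2) → ℂ) :
    bracketR2 n u v 1 = u 1 * v 0 - u 0 * v 1 := by
  simp [bracketR2]

theorem bracketR2_apply_two (hn : 1 ≤ n) (u v : Fin (n + 2) → ℂ) :
    bracketR2 n u v 2 = u 2 * v (Fin.last (n + 1)) - u (Fin.last (n + 1)) * v 2 := by
  rw [bracketR2, if_neg (by rw [val_two hn]; decide), if_pos (val_two hn)]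

theorem bracketR2_apply_last (hn : 2 ≤ n) (u v : Fin (n + 2) → ℂ) :
    bracketR2 n u v (Fin.last (n + 1)) = 0 := by
  simp [bracketR2, show n ≠ 0 by omega, show n ≠ 1 by omega]

theorem bracketR2_apply_of_three_le {k : Fin (n + 2)} (hk : 3 ≤ k.val) (hkn : k.val ≤ n)
    (u v : Fin (n + 2) → ℂ) :
    bracketR2 n u v k = u (prevIndex k) * v 1 + ((k.val : ℂ) - 1) * u k * v 0 := by
  rw [bracketR2, if_neg (by omega), if_neg (by omega), if_pos ⟨hk, hkn⟩, prevIndex]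
  split_ifs <;> rfl

/-- `bracketR2` as a bilinear map. -/
def bracketR2Bilin (n : ℕ) :
    (Fin (n + 2) → ℂ) →ₗ[ℂ] (Fin (n + 2) → ℂ) →ₗ[ℂ] (Fin (n + 2) → ℂ) :=
  LinearMap.mk₂ ℂ (bracketR2 n)
    (fun _ _ _ => by ext; simp only [bracketR2, Pi.add_apply]; split_ifs <;> ring)
    (fun _ _ _ => by ext; simp only [bracketR2, Pi.smul_apply, smul_eq_mul]; split_ifs <;> ring)
    (fun _ _ _ => by ext; simp only [bracketR2, Pi.add_apply]; split_ifs <;> ring)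
    (fun _ _ _ => by ext; simp only [bracketR2, Pi.smul_apply, smul_eq_mul]; split_ifs <;> ring)

theorem bracketR2_apply_eq_zero_of_right (u : Fin (n + 2) → ℂ) {v : Fin (n + 2) → ℂ}
    (h0 : v 0 = 0) (h1 : v 1 = 0) {k : Fin (n + 2)} (hk : k.val ≠ 2) : bracketR2 n u v k = 0 := by
  simp [bracketR2, h0, h1, hk]

theorem bracketR2_self_eq_zero (hn : 1 ≤ n) {v : Fin (n + 2) → ℂ} (h0 : v 0 = 0) (h1 : v 1 = 0) :
    bracketR2 n v v = 0 := by
  ext k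
  by_cases hk : k.val = 2
  · obtain rfl : k = 2 := Fin.ext (hk.trans (val_two hn).symm)
    rw [bracketR2_apply_two hn]
    simp [mul_comm]
  · exact bracketR2_apply_eq_zero_of_right v h0 h1 hk

theorem bracketR2_single_one_left (hn : 3 ≤ n) (v : Fin (n + 2) → ℂ) :
    bracketR2 n (Pi.single 1 1) v = v 0 • Pi.single 1 1 + v 1 • Pi.single 3 1 := by
  have h2 := val_two (n := n) (by omega)
  have h3 := val_three (n := n) (by omega)
  ext k
  simp only [bracketR2, Pi.add_apply, Pi.smul_apply, Pi.single_apply, smul_eq_mul, Fin.ext_iff,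
    Fin.val_zero, Fin.val_one, Fin.val_last]
  grind

theorem bracketR2_single_two_left (hn : 2 ≤ n) (v : Fin (n + 2) → ℂ) :
    bracketR2 n (Pi.single 2 1) v = v (Fin.last (n + 1)) • Pi.single 2 1 := by
  have h2 := val_two (n := n) (by omega)
  ext k
  simp only [bracketR2, Pi.smul_apply, Pi.single_apply, smul_eq_mul, Fin.ext_iff,
    Fin.val_zero, Fin.val_one, Fin.val_last]
  grind

theorem bracketR2_single_last_right (hn : 2 ≤ n) (v : Fin (n + 2) → ℂ) :
    bracketR2 n v (Pi.single (Fin.last (n + 1)) 1) = v 2 • Pi.single 2 1 := by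
  have h2 := val_two (n := n) (by omega)
  ext k
  simp only [bracketR2, Pi.smul_apply, Pi.single_apply, smul_eq_mul, Fin.ext_iff,
    Fin.val_zero, Fin.val_one, Fin.val_last]
  grind

theorem bracketR2_single_zero_single_one :
    bracketR2 n (Pi.single 0 1) (Pi.single 1 1) = -Pi.single 1 1 := by
  ext k
  simp only [bracketR2, Pi.neg_apply, Pi.single_apply, Fin.ext_iff, Fin.val_zero, Fin.val_one,
    Fin.val_last]
  grind

theorem bracketR2_single_prevIndex {k : Fin (n + 2)} (hk : 3 ≤ k.val)
    (hkn : k.val ≤ n) :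
    bracketR2 n (Pi.single (prevIndex k) 1) (Pi.single 1 1) = Pi.single k 1 := by
  have h2 := val_two (n := n) (by omega)
  ext j
  simp only [bracketR2, Pi.single_apply, Fin.ext_iff,
    Fin.val_zero, Fin.val_one, Fin.val_last, val_prevIndex]
  grind

theorem bracketR2_eq_of_apply_zero_eq (hn : 1 ≤ n) {u v : Fin (n + 2) → ℂ} (h : u 0 = v 0) :
    bracketR2 n u v = bracketR2 n u u + (v 1 - u 1) • bracketR2 n u (Pi.single 1 1) +
      (u 2 * v (Fin.last (n + 1)) - u (Fin.last (n + 1)) * v 2) • Pi.single 2 1 := by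
  have h2 := val_two (n := n) (by omega)
  ext k
  simp only [bracketR2, Pi.add_apply, Pi.smul_apply, Pi.single_apply, smul_eq_mul, Fin.ext_iff,
    Fin.val_zero, Fin.val_one, Fin.val_last]
  grind

end Bracket

namespace IsAutR2

variable {n : ℕ} {φ : (Fin (n + 2) → ℂ) →ₗ[ℂ] (Fin (n + 2) → ℂ)}

theorem apply_single_ne_zero (hφ : IsAutR2 n φ) (k : Fin (n + 2)) : φ (Pi.single k 1) ≠ 0 := by
  rw [Ne, map_eq_zero_iff φ hφ.1.1, Pi.single_eq_zero_iff]
  exact one_ne_zero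

theorem bracketR2_single_one (hn : 3 ≤ n) (hφ : IsAutR2 n φ) (v : Fin (n + 2) → ℂ) :
    bracketR2 n (φ (Pi.single 1 1)) (φ v) =
      v 0 • φ (Pi.single 1 1) + v 1 • φ (Pi.single 3 1) := by
  rw [← hφ.2, bracketR2_single_one_left hn, map_add, map_smul, map_smul]

theorem bracketR2_single_two (hn : 2 ≤ n) (hφ : IsAutR2 n φ) (v : Fin (n + 2) → ℂ) :
    bracketR2 n (φ (Pi.single 2 1)) (φ v) = v (Fin.last (n + 1)) • φ (Pi.single 2 1) := by
  rw [← hφ.2, bracketR2_single_two_left hn, map_smul]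

theorem bracketR2_self_single_one (hn : 3 ≤ n) (hφ : IsAutR2 n φ) :
    bracketR2 n (φ (Pi.single 1 1)) (φ (Pi.single 1 1)) = φ (Pi.single 3 1) := by
  simp [hφ.bracketR2_single_one hn]

theorem single_one_apply_zero (hn : 3 ≤ n) (hφ : IsAutR2 n φ) : φ (Pi.single 1 1) 0 = 0 := by
  simpa using (congrFun (hφ.bracketR2_single_one hn (Pi.single 0 1)) 0).symm

theorem single_one_apply_one_ne_zero (hn : 3 ≤ n) (hφ : IsAutR2 n φ) :
    φ (Pi.single 1 1) 1 ≠ 0 := fun h =>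
  hφ.apply_single_ne_zero 3 <| by
    rw [← hφ.bracketR2_self_single_one hn,
      bracketR2_self_eq_zero (by omega) (hφ.single_one_apply_zero hn) h]

theorem apply_zero (hn : 3 ≤ n) (hφ : IsAutR2 n φ) (v : Fin (n + 2) → ℂ) : φ v 0 = v 0 := by
  have h3 : φ (Pi.single 3 1) 1 = 0 := by
    rw [← hφ.bracketR2_self_single_one hn, bracketR2_apply_one]; ring
  have h := congrFun (hφ.bracketR2_single_one hn v) 1
  simp only [bracketR2_apply_one, Pi.add_apply, Pi.smul_apply, smul_eq_mul, h3,
    hφ.single_one_apply_zero hn] at h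
  exact mul_left_cancel₀ (hφ.single_one_apply_one_ne_zero hn) (by linear_combination h)

theorem apply_one_eq_zero (hn : 3 ≤ n) (hφ : IsAutR2 n φ) {v : Fin (n + 2) → ℂ}
    (h0 : v 0 = 0) (h1 : v 1 = 0) : φ v 1 = 0 := by
  have h := congrFun (hφ.bracketR2_single_one hn v) 3
  have hval := val_three (n := n) (by omega)
  rw [bracketR2_apply_of_three_le hval.ge (hval.trans_le hn), hφ.apply_zero hn, h0, h1] at h
  have hprev : prevIndex (3 : Fin (n + 2)) = 1 := if_neg (by omega)
  simpa [hprev, hφ.single_one_apply_one_ne_zero hn] using h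

theorem single_two_eq (hn : 3 ≤ n) (hφ : IsAutR2 n φ) :
    φ (Pi.single 2 1) = φ (Pi.single 2 1) 2 • Pi.single 2 1 := by
  have h2 := val_two (n := n) (by omega)
  set y : Fin (n + 2) → ℂ := Pi.single (Fin.last (n + 1)) 1 with hy
  have hy0 : y 0 = 0 := Pi.single_eq_of_ne (Fin.last_pos'.ne) _
  have hy1 : y 1 = 0 := Pi.single_eq_of_ne (last_ne_one (by omega)).symm _
  have h : bracketR2 n (φ (Pi.single 2 1)) (φ y) = φ (Pi.single 2 1) := by
    simp [hφ.bracketR2_single_two (by omega), hy]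
  ext k
  by_cases hk : k = 2
  · simp [hk]
  · rw [Pi.smul_apply, Pi.single_eq_of_ne hk, smul_zero, ← h]
    exact bracketR2_apply_eq_zero_of_right _ ((hφ.apply_zero hn y).trans hy0)
      (hφ.apply_one_eq_zero hn hy0 hy1) fun h => hk (Fin.ext (h.trans h2.symm))

theorem single_two_apply_two_ne_zero (hn : 3 ≤ n) (hφ : IsAutR2 n φ) :
    φ (Pi.single 2 1) 2 ≠ 0 := fun h =>
  hφ.apply_single_ne_zero 2 <| by rw [hφ.single_two_eq hn, h, zero_smul]

theorem apply_last (hn : 3 ≤ n) (hφ : IsAutR2 n φ) (v : Fin (n + 2) → ℂ) :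
    φ v (Fin.last (n + 1)) = v (Fin.last (n + 1)) := by
  have hl : φ (Pi.single 2 1) (Fin.last (n + 1)) = 0 := by
    rw [hφ.single_two_eq hn, Pi.smul_apply, Pi.single_eq_of_ne (last_ne_two (by omega)), smul_zero]
  have h := congrFun (hφ.bracketR2_single_two (by omega) v) 2
  rw [bracketR2_apply_two (by omega), hl, Pi.smul_apply, smul_eq_mul] at h
  exact mul_left_cancel₀ (hφ.single_two_apply_two_ne_zero hn) (by linear_combination h)

theorem apply_two_eq_zero (hn : 3 ≤ n) (hφ : IsAutR2 n φ) {v : Fin (n + 2) → ℂ}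
    (h2 : v 2 = 0) (hl : v (Fin.last (n + 1)) = 0) : φ v 2 = 0 := by
  have h := hφ.2 v (Pi.single (Fin.last (n + 1)) 1)
  rw [bracketR2_single_last_right (by omega), h2, zero_smul, map_zero] at h
  have h := congrFun h 2
  rw [bracketR2_apply_two (by omega), hφ.apply_last hn, hφ.apply_last hn, hl] at h
  simpa using h.symm

end IsAutR2

section ExpCurve

open scoped Nat

variable {n : ℕ}

/-- The elements with `x`-coordinate `-1` and square zero. -/
def squareZeroSlice (n : ℕ) : Set (Fin (n + 2) → ℂ) := {v | v 0 = -1 ∧ bracketR2 n v v = 0}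

/-- The element `e^{cz} + p e_2 + q y`, where `zʲ` stands for `-x`, `e_1`, `e_3`, …, `e_n`. -/
noncomputable def expCurve (n : ℕ) (c p q : ℂ) : Fin (n + 2) → ℂ := fun k =>
  if k = 0 then -1 else if k = 1 then c else if k = 2 then p else if k = Fin.last (n + 1) then q
  else c ^ (k.val - 1) / (k.val - 1)!

@[simp]
theorem expCurve_zero (c p q : ℂ) : expCurve n c p q 0 = -1 := if_pos rfl

@[simp]
theorem expCurve_one (c p q : ℂ) : expCurve n c p q 1 = c := by simp [expCurve]

theorem expCurve_two (hn : 1 ≤ n) (c p q : ℂ) : expCurve n c p q 2 = p := by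
  have h2 := val_two hn
  simp only [expCurve, Fin.ext_iff, Fin.val_zero, Fin.val_one]
  grind

theorem expCurve_last (hn : 2 ≤ n) (c p q : ℂ) : expCurve n c p q (Fin.last (n + 1)) = q := by
  have h2 := val_two (n := n) (by omega)
  simp only [expCurve, Fin.ext_iff, Fin.val_zero, Fin.val_one, Fin.val_last]
  grind

theorem expCurve_of_three_le {k : Fin (n + 2)} (hk : 3 ≤ k.val) (hkn : k.val ≤ n) (c p q : ℂ) :
    expCurve n c p q k = c ^ (k.val - 1) / (k.val - 1)! := by
  have h2 := val_two (n := n) (by omega)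
  simp only [expCurve, Fin.ext_iff, Fin.val_zero, Fin.val_one, Fin.val_last]
  grind

theorem expCurve_zero_left (hn : 2 ≤ n) (p q : ℂ) :
    expCurve n 0 p q =
      p • Pi.single 2 1 + q • Pi.single (Fin.last (n + 1)) 1 - Pi.single 0 1 := by
  have h2 := val_two (n := n) (by omega)
  ext k
  have hpow (hk : 2 ≤ k.val) : (0 : ℂ) ^ (k.val - 1) = 0 := zero_pow (by omega)
  simp only [expCurve, Pi.add_apply, Pi.sub_apply, Pi.smul_apply, Pi.single_apply, smul_eq_mul,
    Fin.ext_iff, Fin.val_zero, Fin.val_one, Fin.val_last]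
  grind

theorem expCurve_prevIndex {k : Fin (n + 2)} (hk : 3 ≤ k.val) (hkn : k.val ≤ n) (c p q : ℂ) :
    expCurve n c p q (prevIndex k) = c ^ (k.val - 2) / (k.val - 2)! := by
  rcases hk.eq_or_lt' with hk | hk
  · have hprev : prevIndex k = 1 := if_neg (by omega)
    simp [hprev, hk]
  · have hprev : (prevIndex k).val = k.val - 1 := (val_prevIndex k).trans (if_pos hk)
    rw [expCurve_of_three_le (by omega) (by omega), hprev, Nat.sub_sub]

theorem natCast_sub_one_mul_div_factorial {k : ℕ} (hk : 2 ≤ k) (c : ℂ) :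
    ((k : ℂ) - 1) * (c ^ (k - 1) / (k - 1)!) = c * (c ^ (k - 2) / (k - 2)!) := by
  obtain ⟨m, rfl⟩ := Nat.exists_eq_add_of_le' hk
  have hm : (m : ℂ) + 1 ≠ 0 := Nat.cast_add_one_ne_zero m
  have hm' : (m ! : ℂ) ≠ 0 := Nat.cast_ne_zero.mpr m.factorial_ne_zero
  simp only [Nat.add_sub_cancel, show m + 2 - 1 = m + 1 by omega, Nat.factorial_succ]
  push_cast
  field_simp
  ring

theorem hasDerivAt_pow_div_factorial {k : ℕ} (hk : 2 ≤ k) (c : ℂ) :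
    HasDerivAt (fun c : ℂ => c ^ (k - 1) / (k - 1)!) (c ^ (k - 2) / (k - 2)!) c := by
  obtain ⟨m, rfl⟩ := Nat.exists_eq_add_of_le' hk
  have hm : (m : ℂ) + 1 ≠ 0 := Nat.cast_add_one_ne_zero m
  have hderiv : HasDerivAt (fun c : ℂ => c ^ (m + 1) / (m + 1)!) (c ^ m / m !) c := by
    simpa [Nat.factorial_succ, mul_div_mul_left _ _ hm] using
      (hasDerivAt_pow (m + 1) c).div_const ((m + 1)! : ℂ)
  exact hderiv

theorem expCurve_mem_squareZeroSlice (hn : 2 ≤ n) (c p q : ℂ) :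
    expCurve n c p q ∈ squareZeroSlice n := by
  refine ⟨expCurve_zero c p q, ?_⟩
  ext k
  rcases index_cases (by omega) k with rfl | rfl | rfl | rfl | ⟨hk, hkn⟩
  · simp
  · simp [mul_comm]
  · rw [bracketR2_apply_two (by omega)]; simp [mul_comm]
  · rw [bracketR2_apply_last (by omega)]; rfl
  · rw [bracketR2_apply_of_three_le hk hkn, expCurve_prevIndex hk hkn,
      expCurve_of_three_le hk hkn, expCurve_one, expCurve_zero,
      natCast_sub_one_mul_div_factorial (by omega)]
    simp only [Pi.zero_apply]
    ring

theorem eq_expCurve_of_mem_squareZeroSlice (hn : 2 ≤ n) {u : Fin (n + 2) → ℂ}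
    (hu : u ∈ squareZeroSlice n) : u = expCurve n (u 1) (u 2) (u (Fin.last (n + 1))) := by
  set E := expCurve n (u 1) (u 2) (u (Fin.last (n + 1))) with hE
  have hE_mem : E ∈ squareZeroSlice n := expCurve_mem_squareZeroSlice hn _ _ _
  have recursion {v : Fin (n + 2) → ℂ} (hv : v ∈ squareZeroSlice n) {k : Fin (n + 2)}
      (hk : 3 ≤ k.val) (hkn : k.val ≤ n) : ((k.val : ℂ) - 1) * v k = v (prevIndex k) * v 1 := by
    have h := congrFun hv.2 k
    rw [bracketR2_apply_of_three_le hk hkn, hv.1, Pi.zero_apply] at h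
    linear_combination -h
  ext k
  induction k using WellFoundedLT.induction with
  | ind k ih =>
    rcases index_cases (by omega) k with rfl | rfl | rfl | rfl | ⟨hk, hkn⟩
    · rw [hu.1, hE_mem.1]
    · rw [hE, expCurve_one]
    · rw [hE, expCurve_two (by omega)]
    · rw [hE, expCurve_last (by omega)]
    · have hk1 : (k.val : ℂ) - 1 ≠ 0 := sub_ne_zero.mpr (by exact_mod_cast (by omega : k.val ≠ 1))
      refine mul_left_cancel₀ hk1 ?_
      rw [recursion hu hk hkn, recursion hE_mem hk hkn, ih _ (prevIndex_lt hk), hE, expCurve_one]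

theorem hasDerivAt_expCurve (hn : 2 ≤ n) (c p q : ℂ) :
    HasDerivAt (fun c => expCurve n c p q)
      (bracketR2 n (expCurve n c p q) (Pi.single 1 1)) c := by
  rw [hasDerivAt_pi]
  intro k
  rcases index_cases (by omega) k with rfl | rfl | rfl | rfl | ⟨hk, hkn⟩
  · simpa using hasDerivAt_const c (-1 : ℂ)
  · simpa using hasDerivAt_id' c
  · have h2 : (2 : Fin (n + 2)) ≠ 1 := by
      rw [Ne, Fin.ext_iff, val_two (by omega), Fin.val_one]; decide
    simp only [expCurve_two (show 1 ≤ n by omega), bracketR2_apply_two (show 1 ≤ n by omega),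
      Pi.single_eq_of_ne h2, Pi.single_eq_of_ne (last_ne_one (show 1 ≤ n by omega)), mul_zero,
      sub_zero]
    exact hasDerivAt_const c p
  · simp only [expCurve_last (show 2 ≤ n by omega), bracketR2_apply_last (show 2 ≤ n by omega)]
    exact hasDerivAt_const c q
  · simp only [expCurve_of_three_le hk hkn, bracketR2_apply_of_three_le hk hkn,
      expCurve_prevIndex hk hkn, Pi.single_eq_same, Pi.single_eq_of_ne zero_ne_one, mul_zero,
      add_zero, mul_one]
    exact hasDerivAt_pow_div_factorial (by omega) c

theorem bracketR2_single_one_mem_span_squareZeroSlice (hn : 2 ≤ n) {u : Fin (n + 2) → ℂ}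
    (hu : u ∈ Submodule.span ℂ (squareZeroSlice n)) :
    bracketR2 n u (Pi.single 1 1) ∈ Submodule.span ℂ (squareZeroSlice n) := by
  set S := Submodule.span ℂ (squareZeroSlice n)
  have bracket_expCurve_mem (c p q : ℂ) :
      bracketR2 n (expCurve n c p q) (Pi.single 1 1) ∈ S := by
    have hclosure := range_deriv_subset_closure_span_image (fun c => expCurve n c p q) dense_univ
      ⟨c, (hasDerivAt_expCurve hn c p q).deriv⟩
    have hle : Submodule.span ℂ ((fun c => expCurve n c p q) '' Set.univ) ≤ S :=
      Submodule.span_mono <| Set.image_subset_iff.mpr fun c _ =>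
        expCurve_mem_squareZeroSlice hn c p q
    exact S.closed_of_finiteDimensional.closure_subset_iff.mpr hle hclosure
  have hle : S ≤ S.comap ((bracketR2Bilin n).flip (Pi.single 1 1)) :=
    Submodule.span_le.mpr fun v hv => by
      rw [eq_expCurve_of_mem_squareZeroSlice hn hv]
      exact bracket_expCurve_mem _ _ _
  exact hle hu

theorem span_squareZeroSlice (hn : 2 ≤ n) : Submodule.span ℂ (squareZeroSlice n) = ⊤ := by
  set S := Submodule.span ℂ (squareZeroSlice n)
  have hE (c p q : ℂ) : expCurve n c p q ∈ S :=
    Submodule.subset_span (expCurve_mem_squareZeroSlice hn c p q)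
  have single_mem (k : Fin (n + 2)) : Pi.single k 1 ∈ S := by
    induction k using WellFoundedLT.induction with
    | ind k ih =>
      rcases index_cases (by omega) k with rfl | rfl | rfl | rfl | ⟨hk, hkn⟩
      · simpa [expCurve_zero_left hn] using S.neg_mem (hE 0 0 0)
      · simpa [bracketR2_single_zero_single_one] using
          S.neg_mem (bracketR2_single_one_mem_span_squareZeroSlice hn (ih 0 Fin.zero_lt_one))
      · simpa [expCurve_zero_left hn] using S.sub_mem (hE 0 1 0) (hE 0 0 0)
      · simpa [expCurve_zero_left hn] using S.sub_mem (hE 0 0 1) (hE 0 0 0)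
      · rw [← bracketR2_single_prevIndex hk hkn]
        exact bracketR2_single_one_mem_span_squareZeroSlice hn (ih _ (prevIndex_lt hk))
  rw [eq_top_iff, ← (Pi.basisFun ℂ (Fin (n + 2))).span_eq, Submodule.span_le]
  rintro _ ⟨k, rfl⟩
  rw [Pi.basisFun_apply]
  exact single_mem k

end ExpCurve

/-- A local automorphism of `R₂`: a linear map agreeing at each point with some automorphism, which
may depend on the point. -/
def IsLocalAutR2 (n : ℕ) (Φ : (Fin (n + 2) → ℂ) →ₗ[ℂ] (Fin (n + 2) → ℂ)) : Prop :=
  ∀ a, ∃ φ, IsAutR2 n φ ∧ Φ a = φ a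

namespace IsLocalAutR2

variable {n : ℕ} {Φ : (Fin (n + 2) → ℂ) →ₗ[ℂ] (Fin (n + 2) → ℂ)}

theorem bijective (hΦ : IsLocalAutR2 n Φ) : Function.Bijective Φ := by
  have hinj : Function.Injective Φ := by
    rw [injective_iff_map_eq_zero]
    intro a ha
    obtain ⟨φ, hφ, hφa⟩ := hΦ a
    exact (map_eq_zero_iff φ hφ.1.1).mp (hφa ▸ ha)
  exact ⟨hinj, LinearMap.injective_iff_surjective.mp hinj⟩

theorem apply_zero (hn : 3 ≤ n) (hΦ : IsLocalAutR2 n Φ) (v : Fin (n + 2) → ℂ) :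
    Φ v 0 = v 0 := by
  obtain ⟨φ, hφ, hφv⟩ := hΦ v
  rw [hφv, hφ.apply_zero hn]

theorem apply_last (hn : 3 ≤ n) (hΦ : IsLocalAutR2 n Φ) (v : Fin (n + 2) → ℂ) :
    Φ v (Fin.last (n + 1)) = v (Fin.last (n + 1)) := by
  obtain ⟨φ, hφ, hφv⟩ := hΦ v
  rw [hφv, hφ.apply_last hn]

theorem apply_one (hn : 3 ≤ n) (hΦ : IsLocalAutR2 n Φ) (v : Fin (n + 2) → ℂ) :
    Φ v 1 = v 0 * Φ (Pi.single 0 1) 1 + v 1 * Φ (Pi.single 1 1) 1 := by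
  set w := v - v 0 • Pi.single 0 1 - v 1 • Pi.single 1 1 with hw
  have hΦw : Φ w 1 = 0 := by
    obtain ⟨φ, hφ, hφw⟩ := hΦ w
    rw [hφw]
    exact hφ.apply_one_eq_zero hn (by simp [hw]) (by simp [hw])
  simp only [hw, map_sub, map_smul, Pi.sub_apply, Pi.smul_apply, smul_eq_mul] at hΦw
  linear_combination hΦw

theorem apply_two (hn : 3 ≤ n) (hΦ : IsLocalAutR2 n Φ) (v : Fin (n + 2) → ℂ) :
    Φ v 2 = v 2 * Φ (Pi.single 2 1) 2 +
      v (Fin.last (n + 1)) * Φ (Pi.single (Fin.last (n + 1)) 1) 2 := by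
  set w := v - v 2 • Pi.single 2 1 -
    v (Fin.last (n + 1)) • Pi.single (Fin.last (n + 1)) 1 with hw
  have hl2 := last_ne_two (n := n) (by omega)
  have hΦw : Φ w 2 = 0 := by
    obtain ⟨φ, hφ, hφw⟩ := hΦ w
    rw [hφw]
    exact hφ.apply_two_eq_zero hn (by simp [hw, hl2.symm]) (by simp [hw, hl2])
  simp only [hw, map_sub, map_smul, Pi.sub_apply, Pi.smul_apply, smul_eq_mul] at hΦw
  linear_combination hΦw

theorem apply_single_two (hn : 3 ≤ n) (hΦ : IsLocalAutR2 n Φ) :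
    Φ (Pi.single 2 1) = Φ (Pi.single 2 1) 2 • Pi.single 2 1 := by
  obtain ⟨φ, hφ, hφe⟩ := hΦ (Pi.single 2 1)
  rw [hφe]
  exact hφ.single_two_eq hn

theorem apply_mem_squareZeroSlice (hn : 3 ≤ n) (hΦ : IsLocalAutR2 n Φ) {u : Fin (n + 2) → ℂ}
    (hu : u ∈ squareZeroSlice n) : Φ u ∈ squareZeroSlice n := by
  refine ⟨(hΦ.apply_zero hn u).trans hu.1, ?_⟩
  obtain ⟨φ, hφ, hφu⟩ := hΦ u
  rw [hφu, ← hφ.2, hu.2, map_zero]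

theorem apply_expCurve (hn : 3 ≤ n) (hΦ : IsLocalAutR2 n Φ) (c p q : ℂ) :
    Φ (expCurve n c p q) = expCurve n (Φ (Pi.single 1 1) 1 * c - Φ (Pi.single 0 1) 1)
      (p * Φ (Pi.single 2 1) 2 + q * Φ (Pi.single (Fin.last (n + 1)) 1) 2) q := by
  have h := eq_expCurve_of_mem_squareZeroSlice (by omega)
    (hΦ.apply_mem_squareZeroSlice hn (expCurve_mem_squareZeroSlice (by omega) c p q))
  rw [hΦ.apply_one hn, hΦ.apply_two hn, hΦ.apply_last hn, expCurve_zero, expCurve_one,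
    expCurve_two (by omega), expCurve_last (by omega)] at h
  rw [h]
  congr 1
  ring

theorem apply_bracketR2_single_one (hn : 3 ≤ n) (hΦ : IsLocalAutR2 n Φ) {u : Fin (n + 2) → ℂ}
    (hu : u ∈ squareZeroSlice n) :
    Φ (bracketR2 n u (Pi.single 1 1)) =
      Φ (Pi.single 1 1) 1 • bracketR2 n (Φ u) (Pi.single 1 1) := by
  rw [eq_expCurve_of_mem_squareZeroSlice (by omega) hu]
  generalize u 1 = c, u 2 = p, u (Fin.last (n + 1)) = q
  have hderiv : HasDerivAt (fun c => Φ (expCurve n c p q))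
      (Φ (bracketR2 n (expCurve n c p q) (Pi.single 1 1))) c :=
    Φ.toContinuousLinearMap.hasFDerivAt.comp_hasDerivAt c (hasDerivAt_expCurve (by omega) c p q)
  have hderiv' : HasDerivAt (fun c => Φ (expCurve n c p q))
      (Φ (Pi.single 1 1) 1 • bracketR2 n (Φ (expCurve n c p q)) (Pi.single 1 1)) c := by
    have hlin := ((hasDerivAt_id' c).const_mul (Φ (Pi.single 1 1) 1)).sub_const
      (Φ (Pi.single 0 1) 1)
    rw [mul_one] at hlin
    simp only [hΦ.apply_expCurve hn]
    exact (hasDerivAt_expCurve (by omega) _ _ q).scomp c hlin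
  exact hderiv.unique hderiv'

theorem apply_bracketR2_of_mem_squareZeroSlice (hn : 3 ≤ n) (hΦ : IsLocalAutR2 n Φ)
    {u v : Fin (n + 2) → ℂ} (hu : u ∈ squareZeroSlice n) (hv : v ∈ squareZeroSlice n) :
    Φ (bracketR2 n u v) = bracketR2 n (Φ u) (Φ v) := by
  have h0 : u 0 = v 0 := hu.1.trans hv.1.symm
  have hΦ0 : Φ u 0 = Φ v 0 := by rw [hΦ.apply_zero hn, hΦ.apply_zero hn, h0]
  rw [bracketR2_eq_of_apply_zero_eq (by omega) h0, bracketR2_eq_of_apply_zero_eq (by omega) hΦ0,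
    hu.2, (hΦ.apply_mem_squareZeroSlice hn hu).2, zero_add, zero_add, map_add, map_smul, map_smul,
    hΦ.apply_bracketR2_single_one hn hu, hΦ.apply_single_two hn, smul_smul, smul_smul,
    hΦ.apply_last hn, hΦ.apply_last hn, hΦ.apply_two hn u, hΦ.apply_two hn v,
    hΦ.apply_one hn u, hΦ.apply_one hn v, h0]
  congr 2 <;> ring

end IsLocalAutR2

theorem every_local_automorphism_of_R2_is_automorphism_general (n : ℕ) (hn : 3 ≤ n)
    (Φ : (Fin (n + 2) → ℂ) →ₗ[ℂ] (Fin (n + 2) → ℂ)) (hΦ : IsLocalAutR2 n Φ) : IsAutR2 n Φ := by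
  have hbilin : (bracketR2Bilin n).compr₂ Φ = (bracketR2Bilin n).compl₁₂ Φ Φ :=
    LinearMap.ext_on (span_squareZeroSlice (by omega)) fun _ hu =>
      LinearMap.ext_on (span_squareZeroSlice (by omega)) fun _ hv =>
        hΦ.apply_bracketR2_of_mem_squareZeroSlice hn hu hv
  exact ⟨hΦ.bijective, fun u v => LinearMap.congr_fun₂ hbilin u v⟩

/-- Every local automorphism of `R2` is an automorphism. -/
theorem every_local_automorphism_of_R2_is_automorphism
    (n : ℕ) (hn : 5 ≤ n)
    (Φ : (Fin (n + 2) → ℂ) →ₗ[ℂ] (Fin (n + 2) → ℂ))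
    (hloc : ∀ a : Fin (n + 2) → ℂ, ∃ φ, IsAutR2 n φ ∧ Φ a = φ a) :
    IsAutR2 n Φ :=
  every_local_automorphism_of_R2_is_automorphism_general n (by omega) Φ hloc
end

section
/- Let n ≥ 5. Every local automorphism of the (n+2)-dimensional complex solvable Leibniz algebra R_3 is an automorphism of R_3. -/
/-!
`R₃` is the `(n+2)`-dimensional complex solvable Leibniz algebra with basis
`e_1, …, e_n, x, y` and nonzero products `[e_1, e_1] = e_3`,
`[e_i, e_1] = e_{i+1}` for `3 ≤ i ≤ n-1`, `[e_1, x] = e_1`, `[x, e_1] = -e_1`,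
`[e_i, x] = (i-1) • e_i` for `3 ≤ i ≤ n`, `[e_2, y] = e_2`.
We realize it on `Fin (n+2) → ℂ`, where `x = Pi.single 0 1`,
`e_i = Pi.single i 1` for `1 ≤ i ≤ n` and `y = Pi.single (Fin.last (n+1)) 1`,
the bracket being given coordinatewise.
-/

/-- The bracket of the Leibniz algebra `R₃` on `Fin (n+2) → ℂ`. -/
def bracketR3 (n : ℕ) (u v : Fin (n + 2) → ℂ) : Fin (n + 2) → ℂ := fun k =>
  if k.val = 1 then u 1 * v 0 - u 0 * v 1
  else if k.val = 2 then u 2 * v (Fin.last (n + 1))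
  else if 3 ≤ k.val ∧ k.val ≤ n then
    (if 4 ≤ k.val then u ⟨k.val - 1, lt_of_le_of_lt (Nat.sub_le _ _) k.isLt⟩ * v 1
      else u 1 * v 1)
      + ((k.val : ℂ) - 1) * u k * v 0
  else 0

/-- An automorphism of `R₃`: a bijective `ℂ`-linear map preserving the bracket. -/
def IsAutR3 (n : ℕ) (φ : (Fin (n + 2) → ℂ) →ₗ[ℂ] (Fin (n + 2) → ℂ)) : Prop :=
  Function.Bijective φ ∧ ∀ u v, φ (bracketR3 n u v) = bracketR3 n (φ u) (φ v)

/-!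
Modulo `X ^ n`, the span of `x, e₁, e₃, …, eₙ` is the space of formal power series with the bracket
`[p, q] = X (q₁ p - q₀ dp/dX)`, where `qᵢ` is the coefficient of `X ^ i`. An automorphism sends `1`
to a solution of `[E, E] = 0` and `E(0) = 1`, that is, to some `exp(l X)`, and is then forced to be
`p(X) ↦ exp(l X) p(a X)`. A local automorphism thus sends each `exp(s X)` to some `exp(r X)`, and
the rate `r`, being the coefficient of `X` in the image, is affine in `s`. Hence it agrees with one
single automorphism on all exponentials, and these span the power series modulo `X ^ n`.
-/

section PowerSeries

open PowerSeries

section CommRing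

variable {R : Type*} [CommRing R] {n : ℕ}

lemma trunc_eq_trunc_iff {p q : R⟦X⟧} :
    trunc n p = trunc n q ↔ ∀ k < n, coeff k p = coeff k q := by
  simp only [Polynomial.ext_iff, coeff_trunc]
  exact ⟨fun h k hk => by simpa only [hk, if_true] using h k, fun h k => by grind⟩

lemma map_eq_sum_coeff_smul_map_X_pow {M : Type*} [AddCommGroup M] [Module R M]
    (f : R⟦X⟧ →ₗ[R] M) (hf : ∀ p, trunc n p = 0 → f p = 0) (p : R⟦X⟧) :
    f p = ∑ k ∈ Finset.range n, coeff k p • f (X ^ k) := by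
  have : trunc n (p - ∑ k ∈ Finset.range n, coeff k p • X ^ k) = 0 := by
    rw [← map_zero (trunc n), trunc_eq_trunc_iff]
    intro k hk
    simp [coeff_X_pow, hk]
  simpa [sub_eq_zero] using hf _ this

lemma derivative_rescale (a : R) (p : R⟦X⟧) :
    d⁄dX R (rescale a p) = C a * rescale a (d⁄dX R p) := by
  ext k
  simp only [coeff_derivative, coeff_rescale, coeff_C_mul]
  ring

lemma rescale_C (a r : R) : rescale a (C r) = C r := by
  rw [← coe_rescaleAlgHom]
  exact (rescaleAlgHom a).commutes r

lemma constantCoeff_rescale (a : R) (p : R⟦X⟧) :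
    constantCoeff (rescale a p) = constantCoeff p := by
  rw [← coeff_zero_eq_constantCoeff_apply, coeff_rescale, pow_zero, one_mul,
    coeff_zero_eq_constantCoeff_apply]

/-- The Leibniz bracket `[p, q] = X (q₁ p - q₀ dp/dX)` on formal power series. Modulo `X ^ n` it
is the bracket of `R₃` on the span of `x, e₁, e₃, …, eₙ`, with `-x, e₁, e₃, …, eₙ` corresponding
to `1, X, X ^ 2, …, X ^ (n - 1)`. -/
noncomputable def eulerBracket (p q : R⟦X⟧) : R⟦X⟧ :=
  X * (C (coeff 1 q) * p - C (constantCoeff q) * d⁄dX R p)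

lemma constantCoeff_eulerBracket (p q : R⟦X⟧) : constantCoeff (eulerBracket p q) = 0 := by
  simp [eulerBracket]

lemma coeff_succ_eulerBracket (p q : R⟦X⟧) (k : ℕ) :
    coeff (k + 1) (eulerBracket p q) =
      coeff 1 q * coeff k p - constantCoeff q * ((k + 1) * coeff (k + 1) p) := by
  rw [eulerBracket, coeff_succ_X_mul, map_sub, coeff_C_mul, coeff_C_mul, coeff_derivative,
    mul_comm (coeff (k + 1) p)]

lemma eulerBracket_zero_left (q : R⟦X⟧) : eulerBracket 0 q = 0 := by
  simp [eulerBracket]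

lemma eulerBracket_zero_right (p : R⟦X⟧) : eulerBracket p 0 = 0 := by
  simp [eulerBracket]

lemma eulerBracket_one_one : eulerBracket (1 : R⟦X⟧) 1 = 0 := by
  simp [eulerBracket, coeff_one]

lemma eulerBracket_X_one : eulerBracket (X : R⟦X⟧) 1 = -X := by
  simp [eulerBracket, coeff_one]

lemma eulerBracket_X_pow_X (k : ℕ) : eulerBracket (X ^ k : R⟦X⟧) X = X ^ (k + 1) := by
  simp [eulerBracket, pow_succ']

lemma eulerBracket_one_X : eulerBracket (1 : R⟦X⟧) X = X := by
  simpa using eulerBracket_X_pow_X (R := R) 0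

variable [Algebra ℚ R]

/-- The operator `p(X) ↦ exp(l X) p(a X)` on formal power series. -/
noncomputable def weightedDilation (l a : R) : R⟦X⟧ →ₗ[R] R⟦X⟧ :=
  LinearMap.mulLeft R (rescale l (exp R)) ∘ₗ (rescaleAlgHom a).toLinearMap

lemma weightedDilation_apply (l a : R) (p : R⟦X⟧) :
    weightedDilation l a p = rescale l (exp R) * rescale a p := by
  simp [weightedDilation, ← coe_rescaleAlgHom]

lemma weightedDilation_zero_one (p : R⟦X⟧) : weightedDilation 0 1 p = p := by
  simp [weightedDilation_apply]

lemma weightedDilation_weightedDilation (l a m b : R) (p : R⟦X⟧) :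
    weightedDilation l a (weightedDilation m b p) = weightedDilation (l + a * m) (a * b) p := by
  simp only [weightedDilation_apply, map_mul, rescale_rescale, ← exp_mul_exp_eq_exp_add]
  rw [mul_comm a m, mul_comm a b, mul_assoc]

lemma weightedDilation_rescale_exp (l a s : R) :
    weightedDilation l a (rescale s (exp R)) = rescale (l + a * s) (exp R) := by
  rw [weightedDilation_apply, rescale_rescale, exp_mul_exp_eq_exp_add, mul_comm s]

lemma constantCoeff_weightedDilation (l a : R) (p : R⟦X⟧) :
    constantCoeff (weightedDilation l a p) = constantCoeff p := by
  rw [weightedDilation_apply, map_mul, constantCoeff_rescale, constantCoeff_rescale,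
    constantCoeff_exp, one_mul]

lemma coeff_one_weightedDilation (l a : R) (p : R⟦X⟧) :
    coeff 1 (weightedDilation l a p) = l * constantCoeff p + a * coeff 1 p := by
  simp [weightedDilation_apply, coeff_one_mul, coeff_rescale, coeff_exp, constantCoeff_rescale]

lemma trunc_weightedDilation_congr (l a : R) {p q : R⟦X⟧} (h : trunc n p = trunc n q) :
    trunc n (weightedDilation l a p) = trunc n (weightedDilation l a q) := by
  rw [trunc_eq_trunc_iff] at h ⊢
  intro k hk
  simp only [weightedDilation_apply, coeff_mul, coeff_rescale]
  refine Finset.sum_congr rfl fun ij hij => ?_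
  have := Finset.HasAntidiagonal.mem_antidiagonal.mp hij
  rw [h ij.2 (by lia)]

lemma trunc_weightedDilation_eq_zero (l a : R) {p : R⟦X⟧} (hp : trunc n p = 0) :
    trunc n (weightedDilation l a p) = 0 := by
  rw [trunc_weightedDilation_congr l a (hp.trans (map_zero _).symm), map_zero, map_zero]

lemma weightedDilation_eulerBracket (l a : R) (p q : R⟦X⟧) :
    weightedDilation l a (eulerBracket p q) =
      eulerBracket (weightedDilation l a p) (weightedDilation l a q) := by
  simp only [eulerBracket, constantCoeff_weightedDilation, coeff_one_weightedDilation]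
  simp only [weightedDilation_apply, Derivation.leibniz, derivative_rescale, derivative_exp,
    map_mul, map_sub, map_add, rescale_X, rescale_C, smul_eq_mul]
  ring

lemma coeff_one_map_of_local {T : R⟦X⟧ →ₗ[R] Polynomial R}
    (hT : ∀ p, ∃ l a, T p = trunc n (weightedDilation l a p)) (p : R⟦X⟧) :
    (T p).coeff 1 = (T 1).coeff 1 * constantCoeff p + (T X).coeff 1 * coeff 1 p := by
  have map_eq_zero (q : R⟦X⟧) (hq : trunc 2 q = 0) : (T q).coeff 1 = 0 := by
    rw [← map_zero (trunc 2), trunc_eq_trunc_iff] at hq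
    obtain ⟨l, a, h⟩ := hT q
    have h0 : constantCoeff q = 0 := by simpa using hq 0 two_pos
    simp [h, coeff_trunc, coeff_one_weightedDilation, h0, hq 1 one_lt_two]
  have := map_eq_sum_coeff_smul_map_X_pow (Polynomial.lcoeff R 1 ∘ₗ T) map_eq_zero p
  simpa [Finset.sum_range_succ, mul_comm] using this

end CommRing

variable {K : Type*} [Field K] [CharZero K] {n : ℕ}

lemma coeff_rescale_exp (l : K) (k : ℕ) : coeff k (rescale l (exp K)) = l ^ k / k.factorial := by
  simp [coeff_rescale, coeff_exp, div_eq_mul_inv]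

lemma trunc_eq_trunc_rescale_exp {p : K⟦X⟧} (h0 : constantCoeff p = 1)
    (h : trunc n (eulerBracket p p) = 0) :
    trunc n p = trunc n (rescale (coeff 1 p) (exp K)) := by
  rw [← map_zero (trunc n), trunc_eq_trunc_iff] at h
  rw [trunc_eq_trunc_iff]
  intro k
  induction k with
  | zero => simp [h0]
  | succ k ih =>
    intro hk
    have recursion : (k + 1) * coeff (k + 1) p = coeff 1 p * coeff k p := by
      have := h (k + 1) hk
      rw [coeff_succ_eulerBracket, h0, map_zero] at this
      linear_combination -this
    have := Nat.cast_add_one_ne_zero (R := K) k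
    rw [ih (by lia), coeff_rescale_exp] at recursion
    rw [coeff_rescale_exp, Nat.factorial_succ, ← mul_right_inj' this, recursion]
    push_cast
    field_simp
    ring

lemma eq_zero_of_map_rescale_exp_eq_zero (f : K⟦X⟧ →ₗ[K] K) (hf : ∀ p, trunc n p = 0 → f p = 0)
    (hexp : ∀ s, f (rescale s (exp K)) = 0) : f = 0 := by
  set P : Polynomial K :=
    ∑ k ∈ Finset.range n, Polynomial.monomial k (f (X ^ k) / k.factorial) with hP
  have P_eq_zero : P = 0 := by
    refine Polynomial.funext fun s => ?_
    rw [Polynomial.eval_zero, ← hexp s, map_eq_sum_coeff_smul_map_X_pow f hf, hP,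
      Polynomial.eval_finsetSum]
    refine Finset.sum_congr rfl fun k _ => ?_
    rw [Polynomial.eval_monomial, coeff_rescale_exp, smul_eq_mul]
    ring
  have map_X_pow (k : ℕ) (hk : k < n) : f (X ^ k) = 0 := by
    have := congrArg (Polynomial.coeff · k) P_eq_zero
    simpa [hP, Polynomial.coeff_monomial, hk, Nat.factorial_ne_zero] using this
  ext p
  rw [map_eq_sum_coeff_smul_map_X_pow f hf]
  exact Finset.sum_eq_zero fun k hk => by rw [map_X_pow k (Finset.mem_range.mp hk), smul_zero]

lemma linearMap_ext_rescale_exp {M : Type*} [AddCommGroup M] [Module K M] {f g : K⟦X⟧ →ₗ[K] M}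
    (hf : ∀ p, trunc n p = 0 → f p = 0) (hg : ∀ p, trunc n p = 0 → g p = 0)
    (h : ∀ s, f (rescale s (exp K)) = g (rescale s (exp K))) : f = g := by
  ext p
  rw [← sub_eq_zero, ← Module.forall_dual_apply_eq_zero_iff K]
  intro ξ
  have : ξ ∘ₗ (f - g) = 0 :=
    eq_zero_of_map_rescale_exp_eq_zero (n := n) _ (fun q hq => by simp [hf q hq, hg q hq])
      fun s => by simp [h s]
  exact LinearMap.congr_fun this p

theorem exists_eq_trunc_weightedDilation_of_local (hn : 2 ≤ n) {T : K⟦X⟧ →ₗ[K] Polynomial K}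
    (hT : ∀ p, ∃ l a, a ≠ 0 ∧ T p = trunc n (weightedDilation l a p)) :
    ∃ l a, a ≠ 0 ∧ ∀ p, T p = trunc n (weightedDilation l a p) := by
  refine ⟨(T 1).coeff 1, (T X).coeff 1, ?_, fun p => ?_⟩
  · obtain ⟨l, a, ha, h⟩ := hT X
    simpa [h, coeff_trunc, coeff_one_weightedDilation, Nat.lt_of_succ_le hn] using ha
  have map_eq_zero (q : K⟦X⟧) (hq : trunc n q = 0) : T q = 0 := by
    obtain ⟨l, a, -, h⟩ := hT q
    rw [h, trunc_weightedDilation_eq_zero l a hq]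
  have map_rescale_exp (s : K) : T (rescale s (exp K)) =
      trunc n (weightedDilation ((T 1).coeff 1) ((T X).coeff 1) (rescale s (exp K))) := by
    obtain ⟨l, a, -, h⟩ := hT (rescale s (exp K))
    have rate_eq : l + a * s = (T 1).coeff 1 + (T X).coeff 1 * s := by
      have := coeff_one_map_of_local (fun p => (hT p).imp fun _ => Exists.imp fun _ => And.right)
        (rescale s (exp K))
      rw [h, weightedDilation_rescale_exp, coeff_trunc, if_pos (by lia)] at this
      simpa [coeff_rescale_exp, constantCoeff_rescale] using this
    rw [h, weightedDilation_rescale_exp, weightedDilation_rescale_exp, rate_eq]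
  exact LinearMap.congr_fun (linearMap_ext_rescale_exp (g := trunc n ∘ₗ weightedDilation _ _)
    map_eq_zero (fun q hq => trunc_weightedDilation_eq_zero _ _ hq) map_rescale_exp) p

end PowerSeries
section Automorphisms

open PowerSeries

variable {n : ℕ}

/-- The surjection `ℂ⟦X⟧ × ℂ × ℂ → R₃` sending `1, X, X ^ 2, …, X ^ (n - 1)` to
`-x, e₁, e₃, …, eₙ`, killing `X ^ k` for `n ≤ k`, and sending the basis of the last two factors to
`e₂` and `y`. -/
noncomputable def fromSeries (n : ℕ) : ℂ⟦X⟧ × ℂ × ℂ →ₗ[ℂ] (Fin (n + 2) → ℂ) where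
  toFun P j :=
    if j.val = 0 then -constantCoeff P.1
    else if j.val = 1 then coeff 1 P.1
    else if j.val = 2 then P.2.1
    else if j.val = n + 1 then P.2.2
    else coeff (j.val - 1) P.1
  map_add' P Q := by
    ext j
    simp only [Prod.fst_add, Prod.snd_add, map_add, Pi.add_apply]
    split_ifs <;> ring
  map_smul' c P := by
    ext j
    simp only [Prod.smul_fst, Prod.smul_snd, constantCoeff_smul, coeff_smul, Pi.smul_apply,
      smul_eq_mul, RingHom.id_apply]
    split_ifs <;> ring

/-- The polynomial of degree less than `n` recording the coordinates of an element of `R₃` along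
`-x, e₁, e₃, …, eₙ`. The index `k + 1` is meant for `2 ≤ k < n` and does not wrap around there. -/
noncomputable def toPoly (n : ℕ) : (Fin (n + 2) → ℂ) →ₗ[ℂ] Polynomial ℂ :=
  trunc n ∘ₗ
    { toFun u := PowerSeries.mk fun k =>
        if k = 0 then -u 0 else if k = 1 then u 1 else u (Fin.ofNat (n + 2) (k + 1))
      map_add' u v := by
        ext k
        simp only [coeff_mk, map_add, Pi.add_apply]
        split_ifs <;> ring
      map_smul' c u := by
        ext k
        simp only [coeff_mk, coeff_smul, Pi.smul_apply, smul_eq_mul, RingHom.id_apply]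
        split_ifs <;> ring }

lemma fromSeries_zero : fromSeries n (0, 0, 0) = 0 :=
  map_zero _

lemma fromSeries_neg (p : ℂ⟦X⟧) : fromSeries n (-p, 0, 0) = -fromSeries n (p, 0, 0) := by
  rw [← map_neg, Prod.neg_mk, Prod.neg_mk, neg_zero]

lemma fromSeries_apply_zero (P : ℂ⟦X⟧ × ℂ × ℂ) : fromSeries n P 0 = -constantCoeff P.1 := by
  simp [fromSeries]

lemma fromSeries_apply_one (P : ℂ⟦X⟧ × ℂ × ℂ) : fromSeries n P 1 = coeff 1 P.1 := by
  simp [fromSeries]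

lemma fromSeries_apply_two (hn : 2 ≤ n) (P : ℂ⟦X⟧ × ℂ × ℂ) : fromSeries n P 2 = P.2.1 := by
  have : (2 : Fin (n + 2)).val = 2 := Nat.mod_eq_of_lt (by lia)
  simp only [fromSeries, LinearMap.coe_mk, AddHom.coe_mk, this, OfNat.ofNat_ne_zero,
    OfNat.ofNat_ne_one, if_false, if_true]

lemma fromSeries_apply_last (hn : 2 ≤ n) (P : ℂ⟦X⟧ × ℂ × ℂ) :
    fromSeries n P (Fin.last (n + 1)) = P.2.2 := by
  have : n ≠ 0 := by lia
  have : n ≠ 1 := by lia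
  simp_all [fromSeries]

lemma fromSeries_apply_succ {k : ℕ} (hk : 2 ≤ k) (hkn : k < n) (P : ℂ⟦X⟧ × ℂ × ℂ) :
    fromSeries n P ⟨k + 1, by lia⟩ = coeff k P.1 := by
  have : k ≠ 0 := by lia
  have : k ≠ 1 := by lia
  have : k ≠ n := by lia
  simp_all [fromSeries]

lemma coords_ext {u v : Fin (n + 2) → ℂ} (h0 : u 0 = v 0) (h1 : u 1 = v 1) (h2 : u 2 = v 2)
    (hlast : u (Fin.last (n + 1)) = v (Fin.last (n + 1)))
    (hsucc : ∀ k, 2 ≤ k → (hk : k < n) → u ⟨k + 1, by lia⟩ = v ⟨k + 1, by lia⟩) : u = v := by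
  ext ⟨j, hj⟩
  match j with
  | 0 => exact h0
  | 1 => exact h1
  | 2 =>
    have : (2 : Fin (n + 2)) = ⟨2, hj⟩ := Fin.ext (Nat.mod_eq_of_lt hj)
    rwa [← this]
  | k + 3 =>
    rcases Nat.lt_or_ge (k + 2) n with hk | hk
    · exact hsucc (k + 2) (by lia) hk
    · have : (⟨k + 3, hj⟩ : Fin (n + 2)) = Fin.last (n + 1) :=
        Fin.ext (show k + 3 = n + 1 by lia)
      rwa [this]

lemma toPoly_fromSeries (P : ℂ⟦X⟧ × ℂ × ℂ) : toPoly n (fromSeries n P) = trunc n P.1 := by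
  refine trunc_eq_trunc_iff.mpr fun k hk => ?_
  simp only [LinearMap.coe_mk, AddHom.coe_mk, coeff_mk]
  split_ifs with h0 h1
  · rw [fromSeries_apply_zero, neg_neg, h0, coeff_zero_eq_constantCoeff_apply]
  · rw [fromSeries_apply_one, h1]
  · have : Fin.ofNat (n + 2) (k + 1) = ⟨k + 1, by lia⟩ := Fin.ext (Nat.mod_eq_of_lt (by lia))
    rw [this, fromSeries_apply_succ (by lia) hk]

lemma fromSeries_toPoly (hn : 2 ≤ n) (u : Fin (n + 2) → ℂ) :
    fromSeries n (toPoly n u, u 2, u (Fin.last (n + 1))) = u := by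
  have coeff_toPoly {k : ℕ} (hk : k < n) : coeff k (toPoly n u : ℂ⟦X⟧) =
      if k = 0 then -u 0 else if k = 1 then u 1 else u (Fin.ofNat (n + 2) (k + 1)) := by
    simp [toPoly, coeff_trunc, hk]
  refine coords_ext ?_ ?_ ?_ ?_ fun k hk hkn => ?_
  · rw [fromSeries_apply_zero, ← coeff_zero_eq_constantCoeff_apply, coeff_toPoly (by lia),
      if_pos rfl, neg_neg]
  · rw [fromSeries_apply_one, coeff_toPoly hn, if_neg one_ne_zero, if_pos rfl]
  · rw [fromSeries_apply_two hn]
  · rw [fromSeries_apply_last hn]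
  · have : Fin.ofNat (n + 2) (k + 1) = ⟨k + 1, by lia⟩ := Fin.ext (Nat.mod_eq_of_lt (by lia))
    rw [fromSeries_apply_succ hk hkn, coeff_toPoly hkn, if_neg (by lia), if_neg (by lia), this]

lemma fromSeries_surjective (hn : 2 ≤ n) : Function.Surjective (fromSeries n) :=
  fun u => ⟨_, fromSeries_toPoly hn u⟩

lemma fromSeries_eq_iff (hn : 2 ≤ n) {P Q : ℂ⟦X⟧ × ℂ × ℂ} :
    fromSeries n P = fromSeries n Q ↔ trunc n P.1 = trunc n Q.1 ∧ P.2 = Q.2 := by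
  refine ⟨fun h => ⟨?_, Prod.ext ?_ ?_⟩, fun ⟨h, h'⟩ => ?_⟩
  · rw [← toPoly_fromSeries, h, toPoly_fromSeries]
  · rw [← fromSeries_apply_two hn, h, fromSeries_apply_two hn]
  · rw [← fromSeries_apply_last hn, h, fromSeries_apply_last hn]
  · rw [← fromSeries_toPoly hn (fromSeries n P), ← fromSeries_toPoly hn (fromSeries n Q)]
    simp only [toPoly_fromSeries, fromSeries_apply_two hn, fromSeries_apply_last hn, h, h']

lemma bracketR3_fromSeries (hn : 2 ≤ n) (p q : ℂ⟦X⟧) (b c y z : ℂ) :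
    bracketR3 n (fromSeries n (p, b, y)) (fromSeries n (q, c, z)) =
      fromSeries n (eulerBracket p q, b * z, 0) := by
  have val_two : (2 : Fin (n + 2)).val = 2 := Nat.mod_eq_of_lt (by lia)
  refine coords_ext ?_ ?_ ?_ ?_ fun k hk hkn => ?_
  · simp [bracketR3, fromSeries_apply_zero, constantCoeff_eulerBracket]
  · have := coeff_succ_eulerBracket p q 0
    simp only [bracketR3, Fin.val_one, if_true, fromSeries_apply_zero, fromSeries_apply_one]
    simp only [zero_add, coeff_zero_eq_constantCoeff_apply, Nat.cast_zero] at this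
    linear_combination -this
  · simp only [bracketR3, val_two, OfNat.ofNat_ne_one, if_false, if_true, fromSeries_apply_two hn,
      fromSeries_apply_last hn]
  · have : n ≠ 0 := by lia
    have : n ≠ 1 := by lia
    simp_all [bracketR3, fromSeries_apply_last hn]
  · obtain ⟨k, rfl⟩ : ∃ m, k = m + 1 := ⟨k - 1, by lia⟩
    have shifted : (if 4 ≤ k + 2 then
          fromSeries n (p, b, y) ⟨k + 1, by lia⟩ * fromSeries n (q, c, z) 1
        else fromSeries n (p, b, y) 1 * fromSeries n (q, c, z) 1) = coeff k p * coeff 1 q := by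
      split_ifs with h
      · rw [fromSeries_apply_succ (by lia) (by lia), fromSeries_apply_one]
      · rw [fromSeries_apply_one, fromSeries_apply_one, show k = 1 by lia]
    rw [fromSeries_apply_succ hk hkn, coeff_succ_eulerBracket]
    simp only [bracketR3, if_neg (show k + 1 + 1 ≠ 1 by lia), if_neg (show k + 1 + 1 ≠ 2 by lia),
      if_pos (show 3 ≤ k + 1 + 1 ∧ k + 1 + 1 ≤ n by lia)]
    refine (congrArg (· + _) shifted).trans ?_
    rw [fromSeries_apply_succ hk hkn, fromSeries_apply_zero]
    push_cast
    ring

/-- The endomorphism of `R₃` acting by `weightedDilation l a` on `⟨x, e₁, e₃, …, eₙ⟩`, by `b` on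
`e₂` and fixing `y`; these are the automorphisms of `R₃` when `a, b ≠ 0`. -/
noncomputable def dilationR3 (n : ℕ) (l a b : ℂ) : (Fin (n + 2) → ℂ) →ₗ[ℂ] (Fin (n + 2) → ℂ) :=
  fromSeries n ∘ₗ
    (weightedDilation l a ∘ₗ (Polynomial.coeToPowerSeries.algHom ℂ).toLinearMap ∘ₗ toPoly n).prod
      ((b • LinearMap.proj 2).prod (LinearMap.proj (Fin.last (n + 1))))

lemma dilationR3_fromSeries (hn : 2 ≤ n) (l a b : ℂ) (p : ℂ⟦X⟧) (c y : ℂ) :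
    dilationR3 n l a b (fromSeries n (p, c, y)) =
      fromSeries n (weightedDilation l a p, b * c, y) := by
  refine (fromSeries_eq_iff hn).mpr ⟨trunc_weightedDilation_congr l a ?_, ?_⟩
  · simp [toPoly_fromSeries]
  · simp [fromSeries_apply_two hn, fromSeries_apply_last hn]

lemma isAutR3_dilationR3 (hn : 2 ≤ n) (l : ℂ) {a b : ℂ} (ha : a ≠ 0) (hb : b ≠ 0) :
    IsAutR3 n (dilationR3 n l a b) := by
  have left_inverse : Function.LeftInverse (dilationR3 n (-(a⁻¹ * l)) a⁻¹ b⁻¹)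
      (dilationR3 n l a b) := fun u => by
    obtain ⟨⟨p, c, y⟩, rfl⟩ := fromSeries_surjective hn u
    rw [dilationR3_fromSeries hn, dilationR3_fromSeries hn, weightedDilation_weightedDilation,
      neg_add_cancel, inv_mul_cancel₀ ha, weightedDilation_zero_one, inv_mul_cancel_left₀ hb]
  refine ⟨⟨left_inverse.injective, LinearMap.surjective_of_injective left_inverse.injective⟩,
    fun u v => ?_⟩
  obtain ⟨⟨p, c, y⟩, rfl⟩ := fromSeries_surjective hn u
  obtain ⟨⟨q, d, z⟩, rfl⟩ := fromSeries_surjective hn v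
  simp only [bracketR3_fromSeries hn, dilationR3_fromSeries hn, weightedDilation_eulerBracket,
    mul_assoc]

lemma linearMap_ext_fromSeries (hn : 2 ≤ n) {M : Type*} [AddCommGroup M] [Module ℂ M]
    {f g : (Fin (n + 2) → ℂ) →ₗ[ℂ] M}
    (hX : ∀ k, f (fromSeries n (X ^ k, 0, 0)) = g (fromSeries n (X ^ k, 0, 0)))
    (h2 : f (fromSeries n (0, 1, 0)) = g (fromSeries n (0, 1, 0)))
    (hy : f (fromSeries n (0, 0, 1)) = g (fromSeries n (0, 0, 1))) : f = g := by
  have series (p : ℂ⟦X⟧) : (f - g) (fromSeries n (p, 0, 0)) = 0 := by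
    have map_eq_zero (q : ℂ⟦X⟧) (hq : trunc n q = 0) : (f - g) (fromSeries n (q, 0, 0)) = 0 := by
      have : fromSeries n (q, 0, 0) = fromSeries n 0 :=
        (fromSeries_eq_iff hn).mpr ⟨by simpa using hq, rfl⟩
      rw [this, map_zero, map_zero]
    have := map_eq_sum_coeff_smul_map_X_pow
      ((f - g) ∘ₗ fromSeries n ∘ₗ LinearMap.inl ℂ ℂ⟦X⟧ (ℂ × ℂ)) map_eq_zero p
    refine this.trans (Finset.sum_eq_zero fun k _ => ?_)
    simp only [LinearMap.comp_apply, LinearMap.inl_apply, LinearMap.sub_apply]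
    exact smul_eq_zero_of_right _ (sub_eq_zero.mpr (hX k))
  refine sub_eq_zero.mp (LinearMap.ext fun u => ?_)
  obtain ⟨⟨p, b, y⟩, rfl⟩ := fromSeries_surjective hn u
  have : ((p, b, y) : ℂ⟦X⟧ × ℂ × ℂ) = (p, 0, 0) + b • (0, 1, 0) + y • (0, 0, 1) := by simp
  rw [this, map_add, map_add, map_add, map_add, series, map_smul, map_smul, map_smul, map_smul,
    LinearMap.sub_apply, LinearMap.sub_apply, h2, hy]
  simp

lemma eq_fromSeries_of_bracketR3_eq_zero (hn : 2 ≤ n) {u : Fin (n + 2) → ℂ}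
    (hu : ∀ v, bracketR3 n u v = 0) : ∃ y, u = fromSeries n (0, 0, y) := by
  obtain ⟨⟨p, b, y⟩, rfl⟩ := fromSeries_surjective hn u
  have bracket_eq_zero (q : ℂ⟦X⟧) (z : ℂ) : trunc n (eulerBracket p q) = 0 ∧ b * z = 0 := by
    have := hu (fromSeries n (q, 0, z))
    rw [bracketR3_fromSeries hn, ← map_zero (fromSeries n), fromSeries_eq_iff hn] at this
    simpa using this
  have coeff_eq_zero (q : ℂ⟦X⟧) (k : ℕ) (hk : k + 1 < n) :
      coeff 1 q * coeff k p - constantCoeff q * ((k + 1) * coeff (k + 1) p) = 0 := by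
    have := (bracket_eq_zero q 0).1
    rw [← map_zero (trunc n), trunc_eq_trunc_iff] at this
    rw [← coeff_succ_eulerBracket, this _ hk, map_zero]
  have trunc_eq_zero : trunc n p = trunc n 0 := trunc_eq_trunc_iff.mpr fun k hk => by
    cases k with
    | zero => simpa using coeff_eq_zero X 0 hn
    | succ k =>
      have := coeff_eq_zero 1 k hk
      simpa [coeff_one, Nat.cast_add_one_ne_zero] using this
  have b_eq_zero : b = 0 := by simpa using (bracket_eq_zero 0 1).2
  exact ⟨y, (fromSeries_eq_iff hn).mpr ⟨trunc_eq_zero, by rw [b_eq_zero]⟩⟩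

namespace IsAutR3

variable {φ : (Fin (n + 2) → ℂ) →ₗ[ℂ] (Fin (n + 2) → ℂ)}

lemma map_e2_and_map_y (hn : 2 ≤ n) (hφ : IsAutR3 n φ) :
    (∃ b, b ≠ 0 ∧ φ (fromSeries n (0, 1, 0)) = fromSeries n (0, b, 0)) ∧
      φ (fromSeries n (0, 0, 1)) = fromSeries n (0, 0, 1) := by
  obtain ⟨c, hc⟩ : ∃ c, φ (fromSeries n (0, 0, 1)) = fromSeries n (0, 0, c) := by
    refine eq_fromSeries_of_bracketR3_eq_zero hn fun w => ?_
    obtain ⟨v, rfl⟩ := hφ.1.surjective w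
    obtain ⟨⟨q, d, z⟩, rfl⟩ := fromSeries_surjective hn v
    rw [← hφ.2, bracketR3_fromSeries hn, zero_mul]
    simp [eulerBracket, fromSeries_zero]
  obtain ⟨⟨p, b, y⟩, hb⟩ := fromSeries_surjective hn (φ (fromSeries n (0, 1, 0)))
  have image_eq : fromSeries n (p, b, y) = fromSeries n (0, b * c, 0) := by
    have := hφ.2 (fromSeries n (0, 1, 0)) (fromSeries n (0, 0, 1))
    rw [hc, ← hb, bracketR3_fromSeries hn, bracketR3_fromSeries hn] at this
    simpa [eulerBracket, hb] using this
  have b_eq : b = b * c := congrArg Prod.fst ((fromSeries_eq_iff hn).mp image_eq).2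
  rw [← b_eq] at image_eq
  have b_ne_zero : b ≠ 0 := by
    rintro rfl
    have : fromSeries n (0, 1, 0) = fromSeries n (0, 0, 0) := by
      rw [fromSeries_zero, ← map_eq_zero_iff φ hφ.1.injective, ← hb, image_eq, fromSeries_zero]
    simpa using ((fromSeries_eq_iff hn).mp this).2
  have c_eq_one : c = 1 := (left_eq_mul₀ b_ne_zero).mp b_eq
  exact ⟨⟨b, b_ne_zero, hb.symm.trans image_eq⟩, by rw [hc, c_eq_one]⟩

lemma exists_map_series (hn : 2 ≤ n) (hφ : IsAutR3 n φ) (p : ℂ⟦X⟧) :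
    ∃ q, φ (fromSeries n (p, 0, 0)) = fromSeries n (q, 0, 0) := by
  obtain ⟨⟨b, hb, map_e2⟩, map_y⟩ := hφ.map_e2_and_map_y hn
  obtain ⟨⟨q, c, z⟩, hq⟩ := fromSeries_surjective hn (φ (fromSeries n (p, 0, 0)))
  have c_eq_zero : c = 0 := by
    have := hφ.2 (fromSeries n (p, 0, 0)) (fromSeries n (0, 0, 1))
    rw [map_y, ← hq, bracketR3_fromSeries hn, bracketR3_fromSeries hn] at this
    rw [eulerBracket_zero_right, eulerBracket_zero_right, zero_mul, mul_one, fromSeries_zero,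
      map_zero, ← fromSeries_zero, fromSeries_eq_iff hn] at this
    simpa using this.2.symm
  have z_eq_zero : z = 0 := by
    have := hφ.2 (fromSeries n (0, 1, 0)) (fromSeries n (p, 0, 0))
    rw [map_e2, ← hq, bracketR3_fromSeries hn, bracketR3_fromSeries hn] at this
    rw [eulerBracket_zero_left, eulerBracket_zero_left, mul_zero, fromSeries_zero, map_zero,
      ← fromSeries_zero, fromSeries_eq_iff hn] at this
    simpa [hb] using this.2.symm
  exact ⟨q, by rw [← hq, c_eq_zero, z_eq_zero]⟩

lemma map_eulerBracket (hn : 2 ≤ n) (hφ : IsAutR3 n φ) {p q P Q : ℂ⟦X⟧}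
    (hp : φ (fromSeries n (p, 0, 0)) = fromSeries n (P, 0, 0))
    (hq : φ (fromSeries n (q, 0, 0)) = fromSeries n (Q, 0, 0)) :
    φ (fromSeries n (eulerBracket p q, 0, 0)) = fromSeries n (eulerBracket P Q, 0, 0) := by
  have := hφ.2 (fromSeries n (p, 0, 0)) (fromSeries n (q, 0, 0))
  simpa only [hp, hq, bracketR3_fromSeries hn, mul_zero] using this

lemma ext_of_generators (hn : 2 ≤ n) (hφ : IsAutR3 n φ)
    {ψ : (Fin (n + 2) → ℂ) →ₗ[ℂ] (Fin (n + 2) → ℂ)} (hψ : IsAutR3 n ψ)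
    (h_one : φ (fromSeries n (1, 0, 0)) = ψ (fromSeries n (1, 0, 0)))
    (h_X : φ (fromSeries n (X, 0, 0)) = ψ (fromSeries n (X, 0, 0)))
    (h_e2 : φ (fromSeries n (0, 1, 0)) = ψ (fromSeries n (0, 1, 0)))
    (h_y : φ (fromSeries n (0, 0, 1)) = ψ (fromSeries n (0, 0, 1))) : φ = ψ := by
  refine linearMap_ext_fromSeries hn (fun k => ?_) h_e2 h_y
  induction k with
  | zero => exact h_one
  | succ k ih =>
    have : fromSeries n (X ^ (k + 1), 0, 0) =
        bracketR3 n (fromSeries n (X ^ k, 0, 0)) (fromSeries n (X, 0, 0)) := by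
      rw [bracketR3_fromSeries hn, eulerBracket_X_pow_X, mul_zero]
    rw [this, hφ.2, hψ.2, ih, h_X]

lemma coeff_of_map_one_of_map_X (hn : 2 ≤ n) (hφ : IsAutR3 n φ) {E F : ℂ⟦X⟧}
    (hE : φ (fromSeries n (1, 0, 0)) = fromSeries n (E, 0, 0))
    (hF : φ (fromSeries n (X, 0, 0)) = fromSeries n (F, 0, 0)) :
    constantCoeff E = 1 ∧ constantCoeff F = 0 ∧ coeff 1 F ≠ 0 := by
  have F_eq : trunc n F = trunc n (eulerBracket E F) := by
    have := hφ.map_eulerBracket hn hE hF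
    rw [eulerBracket_one_X, hF, fromSeries_eq_iff hn] at this
    exact this.1
  have F_zero : constantCoeff F = 0 := by
    have := trunc_eq_trunc_iff.mp F_eq 0 (by lia)
    simpa [constantCoeff_eulerBracket] using this
  have F_one : coeff 1 F ≠ 0 := fun h => by
    have trunc_F : trunc n F = trunc n 0 := by simp [F_eq, eulerBracket, h, F_zero]
    have : fromSeries n (X, 0, 0) = fromSeries n (0, 0, 0) := by
      rw [fromSeries_zero, ← map_eq_zero_iff φ hφ.1.injective, hF, ← fromSeries_zero]
      exact (fromSeries_eq_iff hn).mpr ⟨trunc_F, rfl⟩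
    simpa using trunc_eq_trunc_iff.mp ((fromSeries_eq_iff hn).mp this).1 1 hn
  have E_zero : constantCoeff E = 1 := by
    have := hφ.map_eulerBracket hn hF hE
    rw [eulerBracket_X_one, fromSeries_neg, map_neg, hF, ← fromSeries_neg,
      fromSeries_eq_iff hn] at this
    have := trunc_eq_trunc_iff.mp this.1 1 hn
    rw [← zero_add 1, coeff_succ_eulerBracket] at this
    simpa [F_zero, F_one] using this
  exact ⟨E_zero, F_zero, F_one⟩

lemma exists_map_one_and_map_X (hn : 2 ≤ n) (hφ : IsAutR3 n φ) :
    ∃ l a, a ≠ 0 ∧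
      φ (fromSeries n (1, 0, 0)) = fromSeries n (weightedDilation l a 1, 0, 0) ∧
      φ (fromSeries n (X, 0, 0)) = fromSeries n (weightedDilation l a X, 0, 0) := by
  obtain ⟨E, hE⟩ := hφ.exists_map_series hn 1
  obtain ⟨F, hF⟩ := hφ.exists_map_series hn X
  obtain ⟨E_zero, F_zero, F_one⟩ := hφ.coeff_of_map_one_of_map_X hn hE hF
  have E_eq : trunc n E = trunc n (weightedDilation (coeff 1 E) (coeff 1 F) 1) := by
    rw [weightedDilation_apply, map_one, mul_one]
    refine trunc_eq_trunc_rescale_exp E_zero ?_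
    have := hφ.map_eulerBracket hn hE hE
    rw [eulerBracket_one_one, fromSeries_zero, map_zero, ← fromSeries_zero,
      fromSeries_eq_iff hn] at this
    simpa using this.1.symm
  have map_one_eq : φ (fromSeries n (1, 0, 0)) =
      fromSeries n (weightedDilation (coeff 1 E) (coeff 1 F) 1, 0, 0) :=
    hE.trans ((fromSeries_eq_iff hn).mpr ⟨E_eq, rfl⟩)
  refine ⟨coeff 1 E, coeff 1 F, F_one, map_one_eq, ?_⟩
  have bracket_eq : eulerBracket (weightedDilation (coeff 1 E) (coeff 1 F) 1) F =
      weightedDilation (coeff 1 E) (coeff 1 F) X := by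
    simp only [eulerBracket, F_zero, weightedDilation_apply, rescale_X, map_one, map_zero]
    ring
  have := hφ.map_eulerBracket hn map_one_eq hF
  rwa [eulerBracket_one_X, bracket_eq] at this

end IsAutR3

theorem isAutR3_iff (hn : 2 ≤ n) {φ : (Fin (n + 2) → ℂ) →ₗ[ℂ] (Fin (n + 2) → ℂ)} :
    IsAutR3 n φ ↔ ∃ l a b, a ≠ 0 ∧ b ≠ 0 ∧ φ = dilationR3 n l a b := by
  refine ⟨fun hφ => ?_, ?_⟩
  · obtain ⟨l, a, ha, map_one, map_X⟩ := hφ.exists_map_one_and_map_X hn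
    obtain ⟨⟨b, hb, map_e2⟩, map_y⟩ := hφ.map_e2_and_map_y hn
    refine ⟨l, a, b, ha, hb, hφ.ext_of_generators hn (isAutR3_dilationR3 hn l ha hb) ?_ ?_ ?_ ?_⟩
    · rw [map_one, dilationR3_fromSeries hn, mul_zero]
    · rw [map_X, dilationR3_fromSeries hn, mul_zero]
    · rw [map_e2, dilationR3_fromSeries hn, mul_one, map_zero]
    · rw [map_y, dilationR3_fromSeries hn, mul_zero, map_zero]
  · rintro ⟨l, a, b, ha, hb, rfl⟩
    exact isAutR3_dilationR3 hn l ha hb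

lemma exists_eq_dilationR3_of_local (hn : 2 ≤ n)
    {Φ : (Fin (n + 2) → ℂ) →ₗ[ℂ] (Fin (n + 2) → ℂ)}
    (hΦ : ∀ u, ∃ l a b, a ≠ 0 ∧ b ≠ 0 ∧ Φ u = dilationR3 n l a b u) :
    ∃ l a b, a ≠ 0 ∧ b ≠ 0 ∧ Φ = dilationR3 n l a b := by
  have map_fromSeries (p : ℂ⟦X⟧) (c y : ℂ) : ∃ l a b, a ≠ 0 ∧ b ≠ 0 ∧
      Φ (fromSeries n (p, c, y)) = fromSeries n (weightedDilation l a p, b * c, y) := by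
    simpa only [dilationR3_fromSeries hn] using hΦ (fromSeries n (p, c, y))
  let T : ℂ⟦X⟧ →ₗ[ℂ] Polynomial ℂ :=
    toPoly n ∘ₗ Φ ∘ₗ fromSeries n ∘ₗ LinearMap.inl ℂ ℂ⟦X⟧ (ℂ × ℂ)
  have T_apply (p : ℂ⟦X⟧) : T p = toPoly n (Φ (fromSeries n (p, 0, 0))) := rfl
  have T_local (p : ℂ⟦X⟧) : ∃ l a, a ≠ 0 ∧ T p = trunc n (weightedDilation l a p) := by
    obtain ⟨l, a, b, ha, -, h⟩ := map_fromSeries p 0 0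
    exact ⟨l, a, ha, by rw [T_apply, h, toPoly_fromSeries]⟩
  obtain ⟨l, a, ha, hT⟩ := exists_eq_trunc_weightedDilation_of_local hn T_local
  obtain ⟨_, _, b, _, hb, map_e2⟩ := map_fromSeries 0 1 0
  obtain ⟨_, _, _, _, _, map_y⟩ := map_fromSeries 0 0 1
  refine ⟨l, a, b, ha, hb, linearMap_ext_fromSeries hn (fun k => ?_) ?_ ?_⟩
  · obtain ⟨_, _, _, _, _, map_X_pow⟩ := map_fromSeries (X ^ k) 0 0
    have := hT (X ^ k)
    rw [T_apply, map_X_pow, toPoly_fromSeries] at this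
    rw [map_X_pow, dilationR3_fromSeries hn, fromSeries_eq_iff hn]
    exact ⟨this, by rw [mul_zero, mul_zero]⟩
  · rw [map_e2, dilationR3_fromSeries hn, map_zero, map_zero]
  · rw [map_y, dilationR3_fromSeries hn, map_zero, map_zero, mul_zero, mul_zero]

end Automorphisms

theorem every_local_automorphism_of_R3_is_automorphism_general
    (n : ℕ) (hn : 2 ≤ n)
    (Φ : (Fin (n + 2) → ℂ) →ₗ[ℂ] (Fin (n + 2) → ℂ))
    (hloc : ∀ a : Fin (n + 2) → ℂ, ∃ φ, IsAutR3 n φ ∧ Φ a = φ a) :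
    IsAutR3 n Φ := by
  refine (isAutR3_iff hn).mpr (exists_eq_dilationR3_of_local hn fun u => ?_)
  obtain ⟨φ, hφ, map_eq⟩ := hloc u
  obtain ⟨l, a, b, ha, hb, rfl⟩ := (isAutR3_iff hn).mp hφ
  exact ⟨l, a, b, ha, hb, map_eq⟩

/-- Every local automorphism of `R3` is an automorphism. -/
theorem every_local_automorphism_of_R3_is_automorphism
    (n : ℕ) (hn : 5 ≤ n)
    (Φ : (Fin (n + 2) → ℂ) →ₗ[ℂ] (Fin (n + 2) → ℂ))
    (hloc : ∀ a : Fin (n + 2) → ℂ, ∃ φ, IsAutR3 n φ ∧ Φ a = φ a) :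
    IsAutR3 n Φ :=
  every_local_automorphism_of_R3_is_automorphism_general n (by lia) Φ hloc
end

section
/- Let n ≥ 5. Every 2-local automorphism of the (n+1)-dimensional complex solvable Leibniz algebra R_0 is an automorphism of R_0 (in particular, it is linear). -/
/-!
Every automorphism `ψ` is determined by its value at `e_1`. Indeed `e_0` is the only solution of
`[x, e_1] = e_1`, `[x, x] = 0`, so `ψ e_0` is the only solution of `[y, ψ e_1] = ψ e_1`,
`[y, y] = 0`, and right multiplication by `e_1` generates the remaining basis vectors from `e_0`.
Hence the automorphisms that interpolate a 2-local automorphism on the pairs `(e_1, a)` all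
coincide.
-/

theorem exists_mem_forall_eq_of_injOn_eval {F X Y : Type*} [FunLike F X Y] {S : Set F} {x₀ : X}
    (hS : S.InjOn (fun ψ => ψ x₀)) {φ : X → Y}
    (hφ : ∀ a, ∃ ψ ∈ S, φ x₀ = ψ x₀ ∧ φ a = ψ a) : ∃ ψ ∈ S, ∀ a, φ a = ψ a := by
  obtain ⟨ψ, hψ, hψx₀, -⟩ := hφ x₀
  refine ⟨ψ, hψ, fun a => ?_⟩
  obtain ⟨θ, hθ, hθx₀, hθa⟩ := hφ a
  rw [hθa, hS hθ hψ (hθx₀.symm.trans hψx₀)]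

/-- A linear automorphism of the algebra `(V, b)`. The product `b` is a bare map, so that for
`b = bracketR0 n` this unfolds to `IsAutR0 n`. -/
def IsBracketAut {R V : Type*} [Semiring R] [AddCommMonoid V] [Module R V] (b : V → V → V)
    (ψ : V →ₗ[R] V) : Prop :=
  Function.Bijective ψ ∧ ∀ u v, ψ (b u v) = b (ψ u) (ψ v)

/-- The bracket of `R₀` with coefficients in an arbitrary commutative ring `R`, written so that
it unfolds to the same term as `bracketR0 n` for `R = ℂ`. -/
def bracketR0Over (R : Type*) [CommRing R] (n : ℕ) (u v : Fin (n + 1) → R) : Fin (n + 1) → R :=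
  fun k =>
    (if 1 ≤ k.val then u ⟨k.val - 1, lt_of_le_of_lt (Nat.sub_le _ _) k.isLt⟩ * v 1 else 0)
      - (k.val : R) * u k * v 0

namespace bracketR0Over

variable {R : Type*} [CommRing R] {n : ℕ}

theorem apply_zero (u v : Fin (n + 1) → R) : bracketR0Over R n u v 0 = 0 := by
  simp [bracketR0Over]

theorem apply_succ (u v : Fin (n + 1) → R) (i : Fin n) :
    bracketR0Over R n u v i.succ = u i.castSucc * v 1 - ((i : ℕ) + 1) * u i.succ * v 0 := by
  simp [bracketR0Over, Fin.castSucc, Fin.castAdd, Fin.castLE]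

theorem single_one_right_apply_succ [NeZero n] (u : Fin (n + 1) → R) (i : Fin n) :
    bracketR0Over R n u (Pi.single 1 1) i.succ = u i.castSucc := by
  simp [apply_succ]

theorem single_castSucc_single_one [NeZero n] (i : Fin n) :
    bracketR0Over R n (Pi.single i.castSucc 1) (Pi.single 1 1) = Pi.single i.succ 1 := by
  ext k
  cases k using Fin.cases with
  | zero => simp [apply_zero]
  | succ j => simp [single_one_right_apply_succ, Pi.single_apply]

theorem single_zero_single_one [NeZero n] :
    bracketR0Over R n (Pi.single 0 1) (Pi.single 1 1) = Pi.single 1 1 := by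
  simpa using single_castSucc_single_one (R := R) (0 : Fin n)

theorem single_zero_single_zero [NeZero n] :
    bracketR0Over R n (Pi.single 0 1) (Pi.single 0 1) = 0 := by
  ext k
  cases k using Fin.cases with
  | zero => simp [apply_zero]
  | succ j => simp [apply_succ]

theorem eq_single_zero (hn : 2 ≤ n) (hnR : (n : R) ∈ nonZeroDivisors R) {x : Fin (n + 1) → R}
    (hx₁ : bracketR0Over R n x (Pi.single 1 1) = Pi.single 1 1)
    (hx : bracketR0Over R n x x = 0) : x = Pi.single 0 1 := by
  obtain ⟨m, rfl⟩ := Nat.exists_eq_add_of_le' hn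
  have x_castSucc (i : Fin (m + 2)) :
      x i.castSucc = (Pi.single 0 1 : Fin (m + 3) → R) i.castSucc := by
    rw [← single_one_right_apply_succ x, hx₁, ← single_zero_single_one, single_one_right_apply_succ]
  have x_zero : x 0 = 1 := by simpa using x_castSucc 0
  have x_one : x 1 = 0 := by simpa using x_castSucc 1
  have x_last : x (Fin.last (m + 2)) = 0 := by
    have h : ((m + 2 : ℕ) : R) * x (Fin.last (m + 2)) = 0 := by
      simpa [bracketR0Over, x_zero, x_one] using congrFun hx (Fin.last (m + 2))
    exact (mul_left_mem_nonZeroDivisors_eq_zero_iff hnR).mp h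
  ext k
  cases k using Fin.lastCases with
  | last => simpa using x_last
  | cast i => exact x_castSucc i

theorem linearMap_ext [NeZero n] {ψ θ : (Fin (n + 1) → R) →ₗ[R] (Fin (n + 1) → R)}
    (hψ : ∀ u v, ψ (bracketR0Over R n u v) = bracketR0Over R n (ψ u) (ψ v))
    (hθ : ∀ u v, θ (bracketR0Over R n u v) = bracketR0Over R n (θ u) (θ v))
    (h₀ : ψ (Pi.single 0 1) = θ (Pi.single 0 1)) (h₁ : ψ (Pi.single 1 1) = θ (Pi.single 1 1)) :
    ψ = θ := by
  refine LinearMap.pi_ext' fun i => LinearMap.ext_ring ?_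
  suffices ψ (Pi.single i 1) = θ (Pi.single i 1) by simpa using this
  induction i using Fin.induction with
  | zero => exact h₀
  | succ i ih => rw [← single_castSucc_single_one, hψ, hθ, ih, h₁]

theorem injOn_apply_single_one (hn : 2 ≤ n) (hnR : (n : R) ∈ nonZeroDivisors R) :
    Set.InjOn (fun ψ : (Fin (n + 1) → R) →ₗ[R] (Fin (n + 1) → R) => ψ (Pi.single 1 1))
      {ψ | IsBracketAut (bracketR0Over R n) ψ} := by
  rintro ψ ⟨⟨hψ_inj, hψ_surj⟩, hψ⟩ θ ⟨-, hθ⟩ (h₁ : ψ (Pi.single 1 1) = θ (Pi.single 1 1))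
  have : NeZero n := ⟨by omega⟩
  obtain ⟨x, hx⟩ := hψ_surj (θ (Pi.single 0 1))
  have hx₁ : bracketR0Over R n x (Pi.single 1 1) = Pi.single 1 1 :=
    hψ_inj (by rw [hψ, hx, h₁, ← hθ, single_zero_single_one])
  have hxx : bracketR0Over R n x x = 0 :=
    hψ_inj (by rw [hψ, hx, ← hθ, single_zero_single_zero, map_zero, map_zero])
  have h₀ : ψ (Pi.single 0 1) = θ (Pi.single 0 1) := by
    rw [← hx, eq_single_zero hn hnR hx₁ hxx]
  exact linearMap_ext hψ hθ h₀ h₁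

end bracketR0Over

theorem every_two_local_automorphism_of_R0_is_automorphism_general
    {R : Type*} [CommRing R] {n : ℕ} (hn : 2 ≤ n) (hnR : (n : R) ∈ nonZeroDivisors R)
    (φ : (Fin (n + 1) → R) → (Fin (n + 1) → R))
    (hφ : ∀ a, ∃ ψ : (Fin (n + 1) → R) →ₗ[R] (Fin (n + 1) → R),
      IsBracketAut (bracketR0Over R n) ψ ∧
        φ (Pi.single 1 1) = ψ (Pi.single 1 1) ∧ φ a = ψ a) :
    ∃ ψ : (Fin (n + 1) → R) →ₗ[R] (Fin (n + 1) → R),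
      IsBracketAut (bracketR0Over R n) ψ ∧ ∀ a, φ a = ψ a :=
  exists_mem_forall_eq_of_injOn_eval (bracketR0Over.injOn_apply_single_one hn hnR) hφ

/-- Every 2-local automorphism of `R₀` (a not necessarily linear map which agrees with
some automorphism on each pair of points) is an automorphism; in particular it is linear. -/
theorem every_two_local_automorphism_of_R0_is_automorphism
    (n : ℕ) (hn : 5 ≤ n)
    (φ : (Fin (n + 1) → ℂ) → (Fin (n + 1) → ℂ))
    (h2loc : ∀ a b : Fin (n + 1) → ℂ, ∃ ψ, IsAutR0 n ψ ∧ φ a = ψ a ∧ φ b = ψ b) :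
    ∃ ψ, IsAutR0 n ψ ∧ ∀ a, φ a = ψ a := by
  have hnC : (n : ℂ) ∈ nonZeroDivisors ℂ := mem_nonZeroDivisors_of_ne_zero (by norm_cast; omega)
  exact every_two_local_automorphism_of_R0_is_automorphism_general (by omega) hnC φ (h2loc _)
end

section
/- Let n ≥ 5. Every 2-local automorphism of the (n+2)-dimensional complex solvable Leibniz algebra R_1 is an automorphism of R_1 (in particular, it is linear). -/
/-!
Every automorphism `ψ` fixes `y`: the left annihilator `{z | [z, u] = 0 for all u}` is `ℂ y`, so
`ψ y = g y`, and comparing `ψ [e₂, y] = ψ e₂` with `[ψ e₂, g y]` gives `g = 1`, because right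
multiplication by `y` is the projection onto `I = span (e₂, …, eₙ)`.

Suppose now that two automorphisms `ψ` and `χ` agree at `w = e₁ + e₂`. The subspace where they agree
is closed under the bracket, hence contains `e₂ = [w, y]` and `eₖ₊₁ = [eₖ, w]`, that is, all of `I`.
For any `z` and `v ∈ I` the difference `d = ψ z - χ z` satisfies
`[ψ v, d] = ψ [v, z] - χ [v, z] = 0`. As `ψ` maps `I` onto `I`, this means `[I, d] = 0`, which
forces `d ∈ I`, and then `d = [d, y] = ψ [z, y] - χ [z, y] = 0` because `[z, y] ∈ I`. So an
automorphism is determined by its value at `w`, and a map that agrees with an automorphism on every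
pair `{w, a}` is itself one.
-/

theorem exists_mem_forall_eq_of_injOn_eval_s5 {F α β : Type*} [FunLike F α β] {S : Set F} {w : α}
    (hw : Set.InjOn (fun f : F => f w) S) {φ : α → β}
    (h : ∀ a, ∃ f ∈ S, φ w = f w ∧ φ a = f a) : ∃ f ∈ S, ∀ a, φ a = f a := by
  obtain ⟨f, hf, hfw, -⟩ := h w
  refine ⟨f, hf, fun a => ?_⟩
  obtain ⟨g, hg, hgw, hga⟩ := h a
  rw [hga, hw hg hf (hgw.symm.trans hfw)]

section R1

variable {n : ℕ}

theorem eq_zero_or_eq_one_or_eq_last_or_two_le (j : Fin (n + 2)) :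
    j = 0 ∨ j = 1 ∨ j = Fin.last (n + 1) ∨ 2 ≤ (j : ℕ) ∧ (j : ℕ) ≤ n := by
  simp only [Fin.ext_iff, Fin.val_zero, Fin.val_one, Fin.val_last]
  omega

theorem bracketR1_smul_right (c : ℂ) (u v : Fin (n + 2) → ℂ) :
    bracketR1 n u (c • v) = c • bracketR1 n u v := by
  ext j
  simp only [bracketR1, Pi.smul_apply, smul_eq_mul]
  split_ifs <;> ring

theorem bracketR1_sub_left (u v w : Fin (n + 2) → ℂ) :
    bracketR1 n (u - v) w = bracketR1 n u w - bracketR1 n v w := by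
  ext j
  simp only [bracketR1, Pi.sub_apply]
  split_ifs <;> ring

theorem bracketR1_sub_right (u v w : Fin (n + 2) → ℂ) :
    bracketR1 n u (v - w) = bracketR1 n u v - bracketR1 n u w := by
  ext j
  simp only [bracketR1, Pi.sub_apply]
  split_ifs <;> ring

/-- The standard basis of `R₁`: `basisR1 n k` is `x` for `k = 0`, `eₖ` for `1 ≤ k ≤ n` and `y` for
`k = n + 1`. The index is a natural number, and the vector is `0` for `k > n + 1`. -/
def basisR1 (n k : ℕ) : Fin (n + 2) → ℂ := fun j => if (j : ℕ) = k then 1 else 0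

theorem basisR1_apply (k : ℕ) (j : Fin (n + 2)) :
    basisR1 n k j = if (j : ℕ) = k then 1 else 0 := rfl

theorem basisR1_apply_zero {k : ℕ} (hk : k ≠ 0) : basisR1 n k 0 = 0 := if_neg hk.symm

theorem basisR1_apply_one {k : ℕ} (hk : k ≠ 1) : basisR1 n k 1 = 0 := by
  rw [basisR1_apply, Fin.val_one, if_neg hk.symm]

theorem basisR1_apply_last {k : ℕ} (hk : k ≠ n + 1) : basisR1 n k (Fin.last (n + 1)) = 0 :=
  if_neg hk.symm

theorem basisR1_ne_zero {k : ℕ} (hk : k < n + 2) : basisR1 n k ≠ 0 := fun h => by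
  simpa [basisR1_apply] using congrFun h ⟨k, hk⟩

theorem smul_basisR1_val (c : ℂ) (j : Fin (n + 2)) : c • basisR1 n j = Pi.single j c := by
  ext i
  simp [basisR1_apply, Pi.single_apply, Fin.ext_iff]

theorem bracketR1_y_right_apply (hn : 1 ≤ n) (u : Fin (n + 2) → ℂ) (j : Fin (n + 2)) :
    bracketR1 n u (basisR1 n (n + 1)) j = if 2 ≤ (j : ℕ) ∧ (j : ℕ) ≤ n then u j else 0 := by
  have hy₀ : basisR1 n (n + 1) 0 = 0 := basisR1_apply_zero (by omega)
  have hy₁ : basisR1 n (n + 1) 1 = 0 := basisR1_apply_one (by omega)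
  have hy : basisR1 n (n + 1) (Fin.last (n + 1)) = 1 := by simp [basisR1_apply]
  simp only [bracketR1, hy₀, hy₁, hy]
  split_ifs <;> first | omega | simp

theorem bracketR1_y_left (hn : 1 ≤ n) (u : Fin (n + 2) → ℂ) :
    bracketR1 n (basisR1 n (n + 1)) u = 0 := by
  have hy₀ : basisR1 n (n + 1) 0 = 0 := basisR1_apply_zero (by omega)
  have hy₁ : basisR1 n (n + 1) 1 = 0 := basisR1_apply_one (by omega)
  ext j
  simp only [bracketR1, hy₀, hy₁, basisR1_apply, Pi.zero_apply]
  split_ifs <;> first | omega | simp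

theorem eq_smul_y_of_forall_bracketR1_eq_zero (hn : 1 ≤ n) {z : Fin (n + 2) → ℂ}
    (hz : ∀ u, bracketR1 n z u = 0) : z = z (Fin.last (n + 1)) • basisR1 n (n + 1) := by
  have hx : z 0 = 0 := by
    simpa [bracketR1, basisR1_apply] using congrFun (hz (basisR1 n 1)) 1
  have he₁ : z 1 = 0 := by
    simpa [bracketR1, basisR1_apply] using congrFun (hz (basisR1 n 0)) 1
  ext j
  rcases eq_zero_or_eq_one_or_eq_last_or_two_le j with rfl | rfl | rfl | hj
  · simp [hx, basisR1_apply]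
  · simp [he₁, basisR1_apply_one (show n + 1 ≠ 1 by omega)]
  · simp [basisR1_apply]
  · have hzj : z j = 0 := by
      simpa [bracketR1_y_right_apply hn, hj] using congrFun (hz (basisR1 n (n + 1))) j
    simp [hzj, basisR1_apply, show (j : ℕ) ≠ n + 1 by omega]

/-- The ideal `span (e₂, …, eₙ)` of `R₁`, which is the span of the squares `[u, u]`: the part of
`R₁` that measures its failure to be a Lie algebra. It is encoded by the vanishing of the
coordinates at `x`, `e₁` and `y`. -/
def leibnizKernelR1 (n : ℕ) : Submodule ℂ (Fin (n + 2) → ℂ) where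
  carrier := {v | v 0 = 0 ∧ v 1 = 0 ∧ v (Fin.last (n + 1)) = 0}
  add_mem' := by simp +contextual
  zero_mem' := by simp
  smul_mem' := by simp +contextual

theorem mem_leibnizKernelR1 {v : Fin (n + 2) → ℂ} :
    v ∈ leibnizKernelR1 n ↔ v 0 = 0 ∧ v 1 = 0 ∧ v (Fin.last (n + 1)) = 0 := Iff.rfl

theorem basisR1_mem_leibnizKernelR1 {k : ℕ} (hk : 2 ≤ k) (hkn : k ≤ n) :
    basisR1 n k ∈ leibnizKernelR1 n :=
  ⟨basisR1_apply_zero (by omega), basisR1_apply_one (by omega), basisR1_apply_last (by omega)⟩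

theorem leibnizKernelR1_le {E : Submodule ℂ (Fin (n + 2) → ℂ)}
    (hE : ∀ k, 2 ≤ k → k ≤ n → basisR1 n k ∈ E) : leibnizKernelR1 n ≤ E := by
  rintro v ⟨hx, he₁, hy⟩
  rw [← Finset.univ_sum_single v]
  refine E.sum_mem fun j _ => ?_
  rcases eq_zero_or_eq_one_or_eq_last_or_two_le j with rfl | rfl | rfl | ⟨hj, hjn⟩
  · simp [hx]
  · simp [he₁]
  · simp [hy]
  · rw [← smul_basisR1_val]
    exact E.smul_mem _ (hE j hj hjn)

theorem bracketR1_y_mem_leibnizKernelR1 (hn : 1 ≤ n) (u : Fin (n + 2) → ℂ) :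
    bracketR1 n u (basisR1 n (n + 1)) ∈ leibnizKernelR1 n := by
  simp [mem_leibnizKernelR1, bracketR1_y_right_apply hn]

theorem mem_leibnizKernelR1_iff_bracketR1_y_eq (hn : 1 ≤ n) {v : Fin (n + 2) → ℂ} :
    v ∈ leibnizKernelR1 n ↔ bracketR1 n v (basisR1 n (n + 1)) = v := by
  refine ⟨fun ⟨hx, he₁, hy⟩ => ?_, fun h => h ▸ bracketR1_y_mem_leibnizKernelR1 hn v⟩
  ext j
  rcases eq_zero_or_eq_one_or_eq_last_or_two_le j with rfl | rfl | rfl | hj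
  all_goals simp_all [bracketR1_y_right_apply]

theorem bracketR1_mem_leibnizKernelR1 {u : Fin (n + 2) → ℂ} (hu : u ∈ leibnizKernelR1 n)
    (v : Fin (n + 2) → ℂ) : bracketR1 n u v ∈ leibnizKernelR1 n := by
  obtain ⟨hx, he₁, _⟩ := hu
  simp [mem_leibnizKernelR1, bracketR1, hx, he₁]

theorem mem_leibnizKernelR1_of_forall_bracketR1_eq_zero (hn : 3 ≤ n) {d : Fin (n + 2) → ℂ}
    (hd : ∀ v ∈ leibnizKernelR1 n, bracketR1 n v d = 0) : d ∈ leibnizKernelR1 n := by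
  have h₂ := hd _ (basisR1_mem_leibnizKernelR1 le_rfl (by omega : 2 ≤ n))
  have h₃ := hd _ (basisR1_mem_leibnizKernelR1 (by omega : 2 ≤ 3) hn)
  have h₂₂ : d 0 + d (Fin.last (n + 1)) = 0 := by
    have := congrFun h₂ ⟨2, by omega⟩
    norm_num [bracketR1, basisR1_apply, show 2 ≤ n by omega] at this
    linear_combination this
  have h₂₃ : d 1 = 0 := by
    simpa [bracketR1, basisR1_apply, hn] using congrFun h₂ ⟨3, by omega⟩
  have h₃₃ : 2 * d 0 + d (Fin.last (n + 1)) = 0 := by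
    have := congrFun h₃ ⟨3, by omega⟩
    norm_num [bracketR1, basisR1_apply, hn] at this
    linear_combination this
  exact ⟨by linear_combination h₃₃ - h₂₂, h₂₃, by linear_combination 2 * h₂₂ - h₃₃⟩

theorem bracketR1_e₁_add_e₂_y (hn : 2 ≤ n) :
    bracketR1 n (basisR1 n 1 + basisR1 n 2) (basisR1 n (n + 1)) = basisR1 n 2 := by
  ext j
  simp only [bracketR1_y_right_apply (by omega : 1 ≤ n), Pi.add_apply, basisR1_apply]
  split_ifs <;> first | omega | simp

theorem bracketR1_basisR1_e₁_add_e₂ {k : ℕ} (hk : 2 ≤ k) (hkn : k < n) :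
    bracketR1 n (basisR1 n k) (basisR1 n 1 + basisR1 n 2) = basisR1 n (k + 1) := by
  have hk₀ : basisR1 n k 0 = 0 := basisR1_apply_zero (by omega)
  have hk₁ : basisR1 n k 1 = 0 := basisR1_apply_one (by omega)
  have hw₀ : (basisR1 n 1 + basisR1 n 2) 0 = 0 := by simp [basisR1_apply]
  have hw₁ : (basisR1 n 1 + basisR1 n 2) 1 = 1 := by simp [basisR1_apply]
  have hw : (basisR1 n 1 + basisR1 n 2) (Fin.last (n + 1)) = 0 := by
    rw [Pi.add_apply, basisR1_apply_last (by omega), basisR1_apply_last (by omega), add_zero]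
  ext j
  simp only [bracketR1, hk₀, hk₁, hw₀, hw₁, hw, basisR1_apply]
  split_ifs <;> first | omega | simp

namespace IsAutR1

variable {ψ χ : (Fin (n + 2) → ℂ) →ₗ[ℂ] (Fin (n + 2) → ℂ)}

theorem map_y (hn : 2 ≤ n) (hψ : IsAutR1 n ψ) : ψ (basisR1 n (n + 1)) = basisR1 n (n + 1) := by
  have hn₁ : 1 ≤ n := by omega
  obtain ⟨g, hg⟩ : ∃ g : ℂ, ψ (basisR1 n (n + 1)) = g • basisR1 n (n + 1) := by
    refine ⟨_, eq_smul_y_of_forall_bracketR1_eq_zero hn₁ fun u => ?_⟩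
    obtain ⟨v, rfl⟩ := hψ.1.surjective u
    rw [← hψ.2, bracketR1_y_left hn₁, map_zero]
  set f := ψ (basisR1 n 2) with hf
  have hf₀ : f ≠ 0 := (map_ne_zero_iff ψ hψ.1.injective).2 (basisR1_ne_zero (by omega))
  have hfg : f = g • bracketR1 n f (basisR1 n (n + 1)) := by
    have he₂ := (mem_leibnizKernelR1_iff_bracketR1_y_eq hn₁).1
      (basisR1_mem_leibnizKernelR1 le_rfl hn)
    rw [← bracketR1_smul_right, ← hg, hf, ← hψ.2, he₂]
  have hfI : f ∈ leibnizKernelR1 n := by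
    rw [hfg]
    exact Submodule.smul_mem _ _ (bracketR1_y_mem_leibnizKernelR1 hn₁ f)
  rw [(mem_leibnizKernelR1_iff_bracketR1_y_eq hn₁).1 hfI] at hfg
  have hg₁ : g = 1 := smul_left_injective ℂ hf₀ (by simpa using hfg.symm)
  rw [hg, hg₁, one_smul]

theorem map_mem_leibnizKernelR1_iff (hn : 2 ≤ n) (hψ : IsAutR1 n ψ) {v : Fin (n + 2) → ℂ} :
    ψ v ∈ leibnizKernelR1 n ↔ v ∈ leibnizKernelR1 n := by
  have hn₁ : 1 ≤ n := by omega
  rw [mem_leibnizKernelR1_iff_bracketR1_y_eq hn₁, mem_leibnizKernelR1_iff_bracketR1_y_eq hn₁,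
    ← hψ.1.injective.eq_iff (a := bracketR1 n v _), hψ.2, hψ.map_y hn]

theorem leibnizKernelR1_le_eqLocus (hn : 2 ≤ n) (hψ : IsAutR1 n ψ) (hχ : IsAutR1 n χ)
    (hw : ψ (basisR1 n 1 + basisR1 n 2) = χ (basisR1 n 1 + basisR1 n 2)) :
    leibnizKernelR1 n ≤ LinearMap.eqLocus ψ χ := by
  refine leibnizKernelR1_le fun k hk => ?_
  simp only [LinearMap.mem_eqLocus]
  induction k, hk using Nat.le_induction with
  | base =>
    intro _
    rw [← bracketR1_e₁_add_e₂_y hn, hψ.2, hχ.2, hw, hψ.map_y hn, hχ.map_y hn]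
  | succ k hk ih =>
    intro hkn
    rw [← bracketR1_basisR1_e₁_add_e₂ hk hkn, hψ.2, hχ.2, hw, ih (by omega)]

theorem injOn_eval_e₁_add_e₂ (hn : 3 ≤ n) :
    Set.InjOn (fun ψ : (Fin (n + 2) → ℂ) →ₗ[ℂ] (Fin (n + 2) → ℂ) =>
      ψ (basisR1 n 1 + basisR1 n 2)) {ψ | IsAutR1 n ψ} := by
  intro ψ (hψ : IsAutR1 n ψ) χ (hχ : IsAutR1 n χ) hw
  have hn₁ : 1 ≤ n := by omega
  have hn₂ : 2 ≤ n := by omega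
  have hagree : ∀ v ∈ leibnizKernelR1 n, ψ v = χ v := hψ.leibnizKernelR1_le_eqLocus hn₂ hχ hw
  refine LinearMap.ext fun z => sub_eq_zero.1 ?_
  have hdI : ψ z - χ z ∈ leibnizKernelR1 n := by
    refine mem_leibnizKernelR1_of_forall_bracketR1_eq_zero hn fun u hu => ?_
    obtain ⟨v, rfl⟩ := hψ.1.surjective u
    have hv := (hψ.map_mem_leibnizKernelR1_iff hn₂).1 hu
    calc bracketR1 n (ψ v) (ψ z - χ z)
        = bracketR1 n (ψ v) (ψ z) - bracketR1 n (χ v) (χ z) := by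
          rw [bracketR1_sub_right, ← hagree v hv]
      _ = ψ (bracketR1 n v z) - χ (bracketR1 n v z) := by rw [hψ.2, hχ.2]
      _ = 0 := sub_eq_zero.2 (hagree _ (bracketR1_mem_leibnizKernelR1 hv z))
  calc ψ z - χ z
      = bracketR1 n (ψ z - χ z) (basisR1 n (n + 1)) :=
        ((mem_leibnizKernelR1_iff_bracketR1_y_eq hn₁).1 hdI).symm
    _ = ψ (bracketR1 n z (basisR1 n (n + 1))) - χ (bracketR1 n z (basisR1 n (n + 1))) := by
        rw [bracketR1_sub_left, hψ.2, hχ.2, hψ.map_y hn₂, hχ.map_y hn₂]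
    _ = 0 := sub_eq_zero.2 (hagree _ (bracketR1_y_mem_leibnizKernelR1 hn₁ z))

end IsAutR1

theorem every_two_local_automorphism_of_R1_is_automorphism_general (hn : 3 ≤ n)
    (φ : (Fin (n + 2) → ℂ) → (Fin (n + 2) → ℂ))
    (hloc : ∀ a, ∃ ψ, IsAutR1 n ψ ∧
      φ (basisR1 n 1 + basisR1 n 2) = ψ (basisR1 n 1 + basisR1 n 2) ∧ φ a = ψ a) :
    ∃ ψ, IsAutR1 n ψ ∧ ∀ a, φ a = ψ a :=
  exists_mem_forall_eq_of_injOn_eval_s5 (IsAutR1.injOn_eval_e₁_add_e₂ hn) hloc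

end R1

/-- Every 2-local automorphism of `R1` (a not necessarily linear map which agrees with
some automorphism on each pair of points) is an automorphism; in particular it is linear. -/
theorem every_two_local_automorphism_of_R1_is_automorphism
    (n : ℕ) (hn : 5 ≤ n)
    (φ : (Fin (n + 2) → ℂ) → (Fin (n + 2) → ℂ))
    (h2loc : ∀ a b : Fin (n + 2) → ℂ, ∃ ψ, IsAutR1 n ψ ∧ φ a = ψ a ∧ φ b = ψ b) :
    ∃ ψ, IsAutR1 n ψ ∧ ∀ a, φ a = ψ a :=
  every_two_local_automorphism_of_R1_is_automorphism_general (by omega) φ fun a => h2loc _ a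
end

section
/- Let n ≥ 5. Every 2-local automorphism of the (n+2)-dimensional complex solvable Leibniz algebra R_3 is an automorphism of R_3 (in particular, it is linear). -/
/-!
An automorphism is determined by its value on the single vector `q = e_1 + e_2`, so a 2-local
automorphism agrees everywhere with any automorphism agreeing with it at `q`.

To see this, let `χ` preserve the bracket and fix `q`. Then `χ` fixes `e_3 = [q, q]` and
`e_{i+1} = [e_i, q]`, and comparing the two sides of `χ [e_n, v] = [e_n, χ v]` shows that it
preserves the `x`-coordinate. The products `[q, x]` and `[x, q]` then give `χ e_1 = e_1`, so `χ` is
the identity on the nilradical `⟨e_1, …, e_n⟩`. Every bracket lies there, whence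
`[χ u, χ v] = [u, v]` for all `u, v`, and left multiplication by `q` and right multiplication by
`x` and `y` recover all coordinates.
-/

theorem exists_forall_eq_of_determined_at {F α β : Type*} [FunLike F α β] {P : F → Prop} {q : α}
    (hdet : ∀ f g : F, P f → P g → f q = g q → f = g) {φ : α → β}
    (hφ : ∀ a, ∃ f : F, P f ∧ φ q = f q ∧ φ a = f a) :
    ∃ f : F, P f ∧ ∀ a, φ a = f a := by
  obtain ⟨f, hf, hfq, -⟩ := hφ q
  refine ⟨f, hf, fun a => ?_⟩
  obtain ⟨g, hg, hgq, hga⟩ := hφ a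
  rw [hga, hdet g f hg hf (hgq.symm.trans hfq)]

namespace R3

/-- The coordinate vector with index `i`: the basis vector `e_i` for `1 ≤ i ≤ n`, while `e n 0` is
`x` and `e n (n + 1)` is `y`. It is zero for `i > n + 1`. -/
def e (n i : ℕ) : Fin (n + 2) → ℂ := fun k => if k.val = i then 1 else 0

/-- The vector `e_1 + e_2`, whose image determines an automorphism of `R₃`. -/
def q (n : ℕ) : Fin (n + 2) → ℂ := e n 1 + e n 2

variable {n : ℕ}

theorem eq_sum_smul_e (u : Fin (n + 2) → ℂ) : u = ∑ i, u i • e n i := by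
  ext k
  simp [e, ← Fin.ext_iff]

theorem val_two (hn : 1 ≤ n) : ((2 : Fin (n + 2)) : ℕ) = 2 :=
  Nat.mod_eq_of_lt (Nat.lt_add_of_pos_left hn)

theorem val_three (hn : 2 ≤ n) : ((3 : Fin (n + 2)) : ℕ) = 3 :=
  Nat.mod_eq_of_lt (Nat.add_lt_add_right hn 2)

section Bracket

variable (u v : Fin (n + 2) → ℂ)

theorem bracketR3_apply_zero : bracketR3 n u v 0 = 0 := by
  simp [bracketR3]

theorem bracketR3_apply_last (hn : 2 ≤ n) : bracketR3 n u v (Fin.last (n + 1)) = 0 := by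
  simp only [bracketR3, Fin.val_last]
  grind

theorem bracketR3_apply_two (hn : 1 ≤ n) :
    bracketR3 n u v 2 = u 2 * v (Fin.last (n + 1)) := by
  simp only [bracketR3, val_two hn]
  norm_num

theorem bracketR3_apply_three (hn : 3 ≤ n) :
    bracketR3 n u v 3 = u 1 * v 1 + 2 * u 3 * v 0 := by
  simp only [bracketR3, val_three (by omega : 2 ≤ n)]
  norm_num [hn]

theorem bracketR3_apply_of_apply_one_eq_zero (hv : v 1 = 0) {k : Fin (n + 2)} (hk : 3 ≤ k.val)
    (hkn : k.val ≤ n) : bracketR3 n u v k = ((k.val : ℂ) - 1) * u k * v 0 := by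
  simp only [bracketR3, hv]
  grind

theorem bracketR3_e_n (hn : 3 ≤ n) :
    bracketR3 n (e n n) v = (((n : ℂ) - 1) * v 0) • e n n := by
  ext k
  simp only [bracketR3, e, Fin.val_zero, Fin.val_one, val_two (by omega : 1 ≤ n), Pi.smul_apply,
    smul_eq_mul]
  grind

theorem bracketR3_q (hn : 3 ≤ n) :
    bracketR3 n (q n) v = v 0 • e n 1 + v (Fin.last (n + 1)) • e n 2 + v 1 • e n 3 := by
  ext k
  simp only [bracketR3, q, e, Fin.val_zero, Fin.val_one, val_two (by omega : 1 ≤ n), Pi.add_apply,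
    Pi.smul_apply, smul_eq_mul]
  grind

theorem bracketR3_e_q {i : ℕ} (hi : 3 ≤ i) (hin : i < n) :
    bracketR3 n (e n i) (q n) = e n (i + 1) := by
  ext k
  simp only [bracketR3, q, e, Fin.val_zero, Fin.val_one, val_two (by omega : 1 ≤ n), Pi.add_apply,
    Fin.val_last]
  grind

theorem bracketR3_e_zero_q (hn : 1 ≤ n) : bracketR3 n (e n 0) (q n) = -e n 1 := by
  ext k
  simp only [bracketR3, q, e, Fin.val_zero, Fin.val_one, val_two hn, Pi.add_apply, Pi.neg_apply,
    Fin.val_last]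
  grind

end Bracket

/-- The nilradical of `R₃`, given by its basis `e_1, …, e_n`. -/
def nilradical (n : ℕ) : Submodule ℂ (Fin (n + 2) → ℂ) :=
  Submodule.span ℂ (e n '' Set.Icc 1 n)

theorem mem_nilradical_of_coords_eq_zero {u : Fin (n + 2) → ℂ} (hu0 : u 0 = 0)
    (hu_last : u (Fin.last (n + 1)) = 0) : u ∈ nilradical n := by
  rw [eq_sum_smul_e u]
  refine Submodule.sum_mem _ fun i _ => ?_
  obtain rfl | rfl | hi : i = 0 ∨ i = Fin.last (n + 1) ∨ i.val ∈ Set.Icc 1 n := by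
    simp only [Fin.ext_iff, Fin.val_zero, Fin.val_last, Set.mem_Icc]
    omega
  · simp only [hu0, zero_smul, Submodule.zero_mem]
  · simp only [hu_last, zero_smul, Submodule.zero_mem]
  · exact Submodule.smul_mem _ _ (Submodule.subset_span ⟨i, hi, rfl⟩)

theorem bracketR3_mem_nilradical (hn : 2 ≤ n) (u v : Fin (n + 2) → ℂ) :
    bracketR3 n u v ∈ nilradical n :=
  mem_nilradical_of_coords_eq_zero (bracketR3_apply_zero u v) (bracketR3_apply_last u v hn)

theorem q_apply_zero : q n 0 = 0 := by
  simp [q, e]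

theorem q_apply_one : q n 1 = 1 := by
  simp [q, e]

theorem q_apply_last (hn : 2 ≤ n) : q n (Fin.last (n + 1)) = 0 := by
  simp only [q, e, Pi.add_apply, Fin.val_last]
  grind

theorem coords_eq_of_bracketR3_q_eq (hn : 3 ≤ n) {u v : Fin (n + 2) → ℂ}
    (h : bracketR3 n (q n) u = bracketR3 n (q n) v) :
    u 0 = v 0 ∧ u 1 = v 1 ∧ u (Fin.last (n + 1)) = v (Fin.last (n + 1)) := by
  rw [bracketR3_q _ hn, bracketR3_q _ hn] at h
  have h1 := congrFun h 1
  have h2 := congrFun h 2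
  have h3 := congrFun h 3
  simp only [e, Pi.add_apply, Pi.smul_apply, smul_eq_mul, Fin.val_one,
    val_two (by omega : 1 ≤ n), val_three (by omega : 2 ≤ n)] at h1 h2 h3
  exact ⟨by simpa using h1, by simpa using h3, by simpa using h2⟩

/-- An endomorphism of the Leibniz algebra `R₃`: a linear map preserving the bracket, not
necessarily bijective. -/
abbrev IsEnd (χ : Module.End ℂ (Fin (n + 2) → ℂ)) : Prop :=
  ∀ u v, χ (bracketR3 n u v) = bracketR3 n (χ u) (χ v)

section FixingQ

variable {χ : Module.End ℂ (Fin (n + 2) → ℂ)}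

theorem map_e_of_three_le (hχ : IsEnd χ) (hq : χ (q n) = q n) {i : ℕ} (hi : 3 ≤ i)
    (hin : i ≤ n) : χ (e n i) = e n i := by
  induction i, hi using Nat.le_induction with
  | base =>
    have hqq : bracketR3 n (q n) (q n) = e n 3 := by
      simp [bracketR3_q _ hin, q_apply_zero, q_apply_one, q_apply_last (by omega : 2 ≤ n)]
    rw [← hqq, hχ, hq]
  | succ i hi ih => rw [← bracketR3_e_q hi hin, hχ, ih (by omega), hq]

theorem map_apply_zero (hn : 3 ≤ n) (hχ : IsEnd χ) (hq : χ (q n) = q n)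
    (v : Fin (n + 2) → ℂ) : χ v 0 = v 0 := by
  have h := hχ (e n n) v
  rw [map_e_of_three_le hχ hq hn le_rfl, bracketR3_e_n _ hn, bracketR3_e_n _ hn, map_smul,
    map_e_of_three_le hχ hq hn le_rfl] at h
  have hn1 : (n : ℂ) - 1 ≠ 0 := sub_ne_zero.mpr (by exact_mod_cast (by omega : n ≠ 1))
  have he : e n n ≠ 0 := fun h0 => by
    simpa [e] using congrFun h0 ⟨n, by omega⟩
  exact (mul_left_cancel₀ hn1 (smul_left_injective ℂ he h)).symm

theorem map_e_one (hn : 3 ≤ n) (hχ : IsEnd χ) (hq : χ (q n) = q n) : χ (e n 1) = e n 1 := by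
  set X := χ (e n 0) with hX
  have hX0 : X 0 = 1 := by
    rw [hX, map_apply_zero hn hχ hq]
    simp [e]
  have hqX : χ (e n 1) = e n 1 + X (Fin.last (n + 1)) • e n 2 + X 1 • e n 3 := by
    have hqx : bracketR3 n (q n) (e n 0) = e n 1 := by
      rw [bracketR3_q _ hn]
      simp [e]
    rw [← hqx, hχ, hq, bracketR3_q _ hn, ← hX, hX0, one_smul, hqx]
  have hXq : bracketR3 n X (q n) = -χ (e n 1) := by
    rw [← map_neg, ← bracketR3_e_zero_q (by omega : 1 ≤ n), hχ, hq]
  have hX_last : X (Fin.last (n + 1)) = 0 := by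
    have h := congrFun hXq 2
    rw [bracketR3_apply_two _ _ (by omega), q_apply_last (by omega), hqX] at h
    simp only [e, Pi.neg_apply, Pi.add_apply, Pi.smul_apply, smul_eq_mul,
      val_two (by omega : 1 ≤ n)] at h
    simpa using h
  have hX1 : X 1 = 0 := by
    have h := congrFun hXq 3
    rw [bracketR3_apply_three _ _ hn, q_apply_zero, q_apply_one, hqX] at h
    simp only [e, Pi.neg_apply, Pi.add_apply, Pi.smul_apply, smul_eq_mul,
      val_three (by omega : 2 ≤ n)] at h
    exact self_eq_neg.mp (by simpa using h)
  simpa [hX_last, hX1] using hqX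

theorem map_eq_self_of_mem_nilradical (hn : 3 ≤ n) (hχ : IsEnd χ) (hq : χ (q n) = q n)
    {u : Fin (n + 2) → ℂ} (hu : u ∈ nilradical n) : χ u = u := by
  have h1 : χ (e n 1) = e n 1 := map_e_one hn hχ hq
  have h2 : χ (e n 2) = e n 2 := by
    rw [q, map_add, h1] at hq
    exact add_left_cancel hq
  refine LinearMap.eqOn_span (g := LinearMap.id) ?_ hu
  rintro _ ⟨i, ⟨hi, hin⟩, rfl⟩
  obtain rfl | rfl | hi3 : i = 1 ∨ i = 2 ∨ 3 ≤ i := by omega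
  · exact h1
  · exact h2
  · exact map_e_of_three_le hχ hq hi3 hin

theorem eq_one_of_map_q (hn : 3 ≤ n) (hχ : IsEnd χ) (hq : χ (q n) = q n) : χ = 1 := by
  have hbracket (u v) : bracketR3 n (χ u) (χ v) = bracketR3 n u v := by
    rw [← hχ]
    exact map_eq_self_of_mem_nilradical hn hχ hq (bracketR3_mem_nilradical (by omega) u v)
  have hcoords (v) : χ v 0 = v 0 ∧ χ v 1 = v 1 ∧ χ v (Fin.last (n + 1)) = v (Fin.last (n + 1)) :=
    coords_eq_of_bracketR3_q_eq hn (by simpa only [hq] using hbracket (q n) v)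
  refine LinearMap.ext fun v => funext fun k => ?_
  obtain ⟨h0, h1, h_last⟩ := hcoords v
  rw [Module.End.one_apply]
  obtain rfl | rfl | rfl | rfl | ⟨hk, hkn⟩ : k = 0 ∨ k = 1 ∨ k = Fin.last (n + 1) ∨ k = 2 ∨
      (3 ≤ k.val ∧ k.val ≤ n) := by
    simp only [Fin.ext_iff, Fin.val_zero, Fin.val_one, val_two (by omega : 1 ≤ n), Fin.val_last]
    omega
  · exact h0
  · exact h1
  · exact h_last
  · have h := congrFun (hbracket v (e n (n + 1))) 2
    rw [bracketR3_apply_two _ _ (by omega), bracketR3_apply_two _ _ (by omega),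
      (hcoords _).2.2] at h
    simpa [e] using h
  · have hx1 : e n 0 1 = 0 := by simp [e]
    have h := congrFun (hbracket v (e n 0)) k
    rw [bracketR3_apply_of_apply_one_eq_zero _ _ ((hcoords _).2.1.trans hx1) hk hkn,
      bracketR3_apply_of_apply_one_eq_zero _ _ hx1 hk hkn, (hcoords _).1] at h
    have hk1 : (k.val : ℂ) - 1 ≠ 0 := sub_ne_zero.mpr (by exact_mod_cast (by omega : k.val ≠ 1))
    simpa [e, hk1] using h

end FixingQ

end R3

open R3

theorem IsAutR3.eq_of_apply_q {n : ℕ} (hn : 3 ≤ n) {ψ ψ' : Module.End ℂ (Fin (n + 2) → ℂ)}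
    (hψ : IsAutR3 n ψ) (hψ' : IsEnd ψ') (hq : ψ' (q n) = ψ (q n)) : ψ' = ψ := by
  let E := LinearEquiv.ofBijective ψ hψ.1
  have hE (u) : ψ (E.symm u) = u := E.apply_symm_apply u
  have hχ : E.symm.toLinearMap ∘ₗ ψ' = 1 := by
    refine eq_one_of_map_q hn (fun u v => hψ.1.1 ?_) (hψ.1.1 ?_)
    · simp only [LinearMap.comp_apply, LinearEquiv.coe_coe, hψ.2, hE, hψ']
    · simp only [LinearMap.comp_apply, LinearEquiv.coe_coe, hE, hq]
  refine LinearMap.ext fun u => ?_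
  rw [← hE (ψ' u)]
  exact congrArg ψ (LinearMap.congr_fun hχ u)

theorem every_two_local_automorphism_of_R3_is_automorphism_general
    (n : ℕ) (hn : 3 ≤ n)
    (φ : (Fin (n + 2) → ℂ) → (Fin (n + 2) → ℂ))
    (h2loc : ∀ a b : Fin (n + 2) → ℂ, ∃ ψ, IsAutR3 n ψ ∧ φ a = ψ a ∧ φ b = ψ b) :
    ∃ ψ, IsAutR3 n ψ ∧ ∀ a, φ a = ψ a :=
  exists_forall_eq_of_determined_at (fun _ _ h h' hq => h'.eq_of_apply_q hn h.2 hq)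
    (h2loc (q n))

/-- Every 2-local automorphism of `R3` (a not necessarily linear map which agrees with
some automorphism on each pair of points) is an automorphism; in particular it is linear. -/
theorem every_two_local_automorphism_of_R3_is_automorphism
    (n : ℕ) (hn : 5 ≤ n)
    (φ : (Fin (n + 2) → ℂ) → (Fin (n + 2) → ℂ))
    (h2loc : ∀ a b : Fin (n + 2) → ℂ, ∃ ψ, IsAutR3 n ψ ∧ φ a = ψ a ∧ φ b = ψ b) :
    ∃ ψ, IsAutR3 n ψ ∧ ∀ a, φ a = ψ a := by
  exact every_two_local_automorphism_of_R3_is_automorphism_general n (by omega) φ h2loc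
end
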